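/- Fix k ≥ 0 and n ≥ 3. Let X be the set of noncrossing dissections of the regular n-gon P_n with exactly k diagonals, and let the cyclic group C = Z_n act on X by rotation (by one vertex position). Then the triple (X, C, X(q)) exhibits the cyclic sieving phenomenon, where X(q) = (1/[n+k]_q)·[n+k choose k+1]_q·[n−3 choose k]_q = [n+k−1]!_q / ([k]!_q [k+1]!_q [n−k−3]!_q [n−1]_q [n−2]_q). -/

import Mathlib

/-!
Both sides are computed explicitly for the rotation by `d`. Put `m = gcd n d` and `n = r m`, so that
`ζ ^ d` is a primitive `r`-th root of unity and a dissection is fixed by the `d`-th power of the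
rotation iff it is fixed by the rotation by `m` steps.

*The polynomial.* `X(q)` equals `[n+k-1 choose k]_q [n-3 choose k]_q / [k+1]_q`, which is written
without division as `sievePoly` (`sievePoly_spec`). The `q`-Lucas theorem (`eval_qbinom_lucas`) gives
its values at a primitive `r`-th root of unity:
* `r = 1`: `(n+k-1 choose k) (n-3 choose k) / (k+1)`;
* `r = 2`: `(m+a-1 choose a) (m-2 choose a)` for `k = 2 a`, and `(m+a choose a+1) (m-2 choose a)` for
  `k = 2 a + 1`;
* `r ≥ 3`: `(m+a-1 choose a) (m-1 choose a)` for `k = r a`, and `0` if `r` does not divide `k`.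

*Arcs on a circle.* Both kinds of dissections that have to be counted reduce to noncrossing sets of
oriented arcs on a circle with `m` marked points, where loops `(i, i)`, going once around, are
allowed. For multisets of such arcs the enumeration is transparent: a noncrossing multiset is
determined by its starting points and its end points (with multiplicity), and these are arbitrary.
More generally, adding `c` rays that come in from infinity, one obtains
`multichoose m a * multichoose m (a + c)` configurations of `a` arcs and `c` rays
(`existsUnique_hasMargins`, `card_compat`). A multiset is a set of non-edges together with an
arbitrary choice of multiplicities and edges, so the numbers of sets and of multisets are related by
a unitriangular system (`card_by_support`), which is solved by the Vandermonde convolution. With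
`c = 0` this counts the noncrossing sets of `b` arcs without edges as
`(m+b-1 choose b) (m-1 choose b)` (`card_isDiss`); with `c = 1` it counts those of `b + 1` arcs which
contain a loop as `(m+b choose b+1) (m-2 choose b)` (`card_isDiss_loop`).

*Dissections.* If `r ≥ 2`, no diagonal of a dissection fixed by the rotation by `m` steps cuts off
more than `m` sides on both of its sides, because it would cross its own image (`chord_short`).
Hence the dissection folds to a noncrossing set of arcs modulo `m` without edges, and every such set
arises (`card_symmetric`). An arc corresponds to `r` diagonals, except that for `r = 2` a loop
corresponds to one diameter (`numDiag_unfold`). This gives the values above. If `r = 1`, contracting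
one side of the `n`-gon turns all dissections into noncrossing sets of arcs modulo `n - 1` compatible
with a loop at a given vertex (`card_dissection_eq_loopDiss`), and by rotational symmetry their
number is `1 / (n-1)` of the number of sets with a loop.
-/

open Finset

/-- Two chords `{i,j}` and `{a,b}` of a polygon whose vertices are labeled clockwise by
`ZMod m` (i.e. `0,1,…,m−1`) cross iff their endpoints strictly interleave in cyclic order:
writing the pairs in increasing order of labels as `{p,q}`, `{r,s}` with `p<q`, `r<s`,
they cross iff `p<r<q<s` or `r<p<s<q`. -/
def crossE {m : ℕ} (i j a b : ZMod m) : Prop :=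
  (min i.val j.val < min a.val b.val ∧ min a.val b.val < max i.val j.val ∧
     max i.val j.val < max a.val b.val) ∨
  (min a.val b.val < min i.val j.val ∧ min i.val j.val < max a.val b.val ∧
     max a.val b.val < max i.val j.val)

/-- The `q`-analog `[m]_q = 1 + q + ⋯ + q^{m-1}` as a polynomial over `ℂ`. -/
noncomputable def qnat (m : ℕ) : Polynomial ℂ := ∑ i ∈ Finset.range m, Polynomial.X ^ i

/-- The Gaussian binomial coefficient `[m choose r]_q` as a polynomial over `ℂ`,
defined via the `q`-Pascal recurrence
`[m+1 choose r+1]_q = [m choose r]_q + q^{r+1}·[m choose r+1]_q`. -/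
noncomputable def qbinom : ℕ → ℕ → Polynomial ℂ
  | _, 0 => 1
  | 0, _ + 1 => 0
  | m + 1, r + 1 => qbinom m r + Polynomial.X ^ (r + 1) * qbinom m (r + 1)

/-! ### Gaussian binomial coefficients and the sieving polynomial at roots of unity -/

theorem qbinom_zero_right (m : ℕ) : qbinom m 0 = 1 := by cases m <;> rfl

theorem qbinom_succ (m r : ℕ) :
    qbinom (m + 1) (r + 1) = qbinom m r + Polynomial.X ^ (r + 1) * qbinom m (r + 1) := rfl

theorem qbinom_eq_zero (m : ℕ) : ∀ r, m < r → qbinom m r = 0 := by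
  induction m with
  | zero => intro r hr; cases r with
    | zero => omega
    | succ r => rfl
  | succ m ih => intro r hr; cases r with
    | zero => omega
    | succ r => rw [qbinom_succ, ih r (by omega), ih (r + 1) (by omega)]; simp

theorem qnat_add (a b : ℕ) : qnat (a + b) = qnat a + Polynomial.X ^ a * qnat b := by
  simp only [qnat, Finset.sum_range_add, pow_add, Finset.mul_sum]

/-- The ratio of consecutive Gaussian binomial coefficients in a row, cleared of denominators:
`[m choose r+1]_q [r+1]_q = [m choose r]_q [m-r]_q`. -/
theorem qbinom_ratio (m : ℕ) : ∀ r, r ≤ m →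
    qbinom m (r + 1) * qnat (r + 1) = qbinom m r * qnat (m - r) := by
  induction m with
  | zero =>
    intro r hr
    obtain rfl : r = 0 := by omega
    simp [qbinom, qnat]
  | succ m ih =>
    intro r hr
    have h1 : qbinom (m + 1) (r + 1) * qnat (r + 1) = qbinom m r * qnat (m + 1) := by
      rcases Nat.lt_or_ge m r with h | h
      · rw [qbinom_succ, qbinom_eq_zero m r h, qbinom_eq_zero m (r + 1) (by omega)]; simp
      · have e : qnat (m + 1) = qnat (r + 1) + Polynomial.X ^ (r + 1) * qnat (m - r) := by
          rw [← qnat_add]; congr 1; omega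
        rw [qbinom_succ, e]
        linear_combination Polynomial.X ^ (r + 1) * ih r h
    rw [h1]
    cases r with
    | zero => simp [qbinom_zero_right]
    | succ r =>
      have e : qnat (m + 1) = qnat (r + 1) + Polynomial.X ^ (r + 1) * qnat (m - r) := by
        rw [← qnat_add]; congr 1; omega
      rw [qbinom_succ, e, show m + 1 - (r + 1) = m - r by omega]
      linear_combination ih r (by omega)

/-- The absorption identity `[m+1 choose r+1]_q [r+1]_q = [m choose r]_q [m+1]_q`. -/
theorem qbinom_absorb (m r : ℕ) :
    qbinom (m + 1) (r + 1) * qnat (r + 1) = qbinom m r * qnat (m + 1) := by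
  rcases Nat.lt_or_ge m r with h | h
  · rw [qbinom_succ, qbinom_eq_zero m r h, qbinom_eq_zero m (r + 1) (by omega)]; simp
  · have e : qnat (m + 1) = qnat (r + 1) + Polynomial.X ^ (r + 1) * qnat (m - r) := by
      rw [← qnat_add]; congr 1; omega
    rw [qbinom_succ, e]
    linear_combination Polynomial.X ^ (r + 1) * qbinom_ratio m r h

theorem qnat_ne_zero (m : ℕ) : qnat (m + 1) ≠ 0 := by
  intro h
  have := congrArg (Polynomial.eval 1) h
  simp [qnat, Polynomial.eval_finsetSum] at this
  exact absurd this (by exact_mod_cast Nat.succ_ne_zero m)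

/-- The sieving polynomial `[n+k-1 choose k]_q [n-3 choose k]_q / [k+1]_q`, written without
division by means of `1 = [n-1]_q - q [k+1]_q - q^{k+2} [n-3-k]_q`. -/
noncomputable def sievePoly (n k : ℕ) : Polynomial ℂ :=
  qbinom (n + k - 1) (k + 1) * qbinom (n - 3) k
    - Polynomial.X * (qbinom (n + k - 1) k * qbinom (n - 3) k)
    - Polynomial.X ^ (k + 2) * (qbinom (n + k - 1) k * qbinom (n - 3) (k + 1))

/-- `sievePoly` is indeed the quotient by `[k+1]_q`; everything about its values is read off from
this identity whenever `[k+1]_q` does not vanish. -/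
theorem sievePoly_mul_qnat (n k : ℕ) (hn : 3 ≤ n) :
    sievePoly n k * qnat (k + 1) = qbinom (n + k - 1) k * qbinom (n - 3) k := by
  rcases Nat.lt_or_ge (n - 3) k with h | h
  · simp [sievePoly, qbinom_eq_zero _ _ h, qbinom_eq_zero (n - 3) (k + 1) (by omega)]
  · have hA := qbinom_ratio (n + k - 1) k (by omega)
    have hB := qbinom_ratio (n - 3) k h
    have e : qnat (n + k - 1 - k) = 1 + Polynomial.X *
        (qnat (k + 1) + Polynomial.X ^ (k + 1) * qnat (n - 3 - k)) := by
      rw [← qnat_add, show n + k - 1 - k = 1 + (k + 1 + (n - 3 - k)) by omega, qnat_add 1]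
      simp [qnat]
    rw [e] at hA
    simp only [sievePoly]
    linear_combination qbinom (n - 3) k * hA
      - Polynomial.X ^ (k + 2) * qbinom (n + k - 1) k * hB

/-- `sievePoly` is also the quotient by `[n+k]_q` of `[n+k choose k+1]_q [n-3 choose k]_q`,
by absorption. -/
theorem sievePoly_spec (n k : ℕ) (hn : 3 ≤ n) :
    sievePoly n k * qnat (n + k) = qbinom (n + k) (k + 1) * qbinom (n - 3) k := by
  apply mul_right_cancel₀ (qnat_ne_zero k)
  have h := qbinom_absorb (n + k - 1) k
  rw [show n + k - 1 + 1 = n + k by omega] at h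
  linear_combination qnat (n + k) * sievePoly_mul_qnat n k hn - qbinom (n - 3) k * h

section Lucas
variable {r : ℕ} {w : ℂ}

theorem eval_qnat_ne_zero (hw : IsPrimitiveRoot w r) (j : ℕ) (hj : 0 < j) (hjr : j < r) :
    (qnat j).eval w ≠ 0 := by
  have hw1 : w ≠ 1 := hw.ne_one (by omega)
  have e : (qnat j).eval w * (w - 1) = w ^ j - 1 := by
    simp only [qnat, Polynomial.eval_finsetSum, Polynomial.eval_pow, Polynomial.eval_X]
    exact geom_sum_mul w j
  intro h
  rw [h, zero_mul] at e
  exact hw.pow_ne_one_of_pos_of_lt (by omega) hjr (sub_eq_zero.mp e.symm)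

theorem eval_qnat_mul (hw : IsPrimitiveRoot w r) (hr : 2 ≤ r) (a : ℕ) :
    (qnat (r * a)).eval w = 0 := by
  have hw1 : w ≠ 1 := hw.ne_one (by omega)
  have e : (qnat (r * a)).eval w * (w - 1) = w ^ (r * a) - 1 := by
    simp only [qnat, Polynomial.eval_finsetSum, Polynomial.eval_pow, Polynomial.eval_X]
    exact geom_sum_mul w _
  rw [pow_mul, hw.pow_eq_one, one_pow, sub_self] at e
  exact (mul_eq_zero.mp e).resolve_right (sub_ne_zero.mpr hw1)

theorem eval_qbinom_self (hw : IsPrimitiveRoot w r) (j : ℕ) (hj : 0 < j) (hjr : j < r) :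
    (qbinom r j).eval w = 0 := by
  obtain ⟨i, rfl⟩ : ∃ i, j = i + 1 := ⟨j - 1, by omega⟩
  obtain ⟨t, rfl⟩ : ∃ t, r = t + 1 := ⟨r - 1, by omega⟩
  have h := congrArg (Polynomial.eval w) (qbinom_absorb t i)
  have h0 := eval_qnat_mul hw (by omega) 1
  rw [mul_one] at h0
  rw [Polynomial.eval_mul, Polynomial.eval_mul, h0, mul_zero] at h
  exact (mul_eq_zero.mp h).resolve_right (eval_qnat_ne_zero hw _ hj hjr)

theorem qbinom_self (m : ℕ) : qbinom m m = 1 := by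
  induction m with
  | zero => rfl
  | succ m ih => rw [qbinom_succ, ih, qbinom_eq_zero m (m + 1) (by omega)]; simp

/-- At a primitive `r`-th root of unity the `q`-Pascal recurrence iterates `r` times to the
ordinary Pascal recurrence with step `r`. -/
theorem eval_qbinom_add (hw : IsPrimitiveRoot w r) (hr : 0 < r) (m : ℕ) : ∀ j,
    (qbinom (m + r) j).eval w =
      (qbinom m j).eval w + if r ≤ j then (qbinom m (j - r)).eval w else 0 := by
  induction m with
  | zero =>
    intro j
    rw [zero_add]
    rcases Nat.eq_zero_or_pos j with rfl | hj
    · simp [qbinom_zero_right, show ¬ r ≤ 0 by omega]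
    rw [qbinom_eq_zero 0 j hj]
    rcases lt_trichotomy j r with h | rfl | h
    · simp [eval_qbinom_self hw j hj h, show ¬ r ≤ j by omega]
    · simp [qbinom_self]
    · rw [qbinom_eq_zero r j h, qbinom_eq_zero 0 (j - r) (by omega)]; simp
  | succ m ih =>
    intro j
    rw [show m + 1 + r = (m + r) + 1 by omega]
    cases j with
    | zero => simp [qbinom_zero_right, show ¬ r ≤ 0 by omega]
    | succ j =>
      simp only [qbinom_succ, Polynomial.eval_add, Polynomial.eval_mul, Polynomial.eval_pow,
        Polynomial.eval_X, ih]
      rcases lt_trichotomy (j + 1) r with h | h | h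
      · simp only [show ¬ r ≤ j by omega, show ¬ r ≤ j + 1 by omega, if_false]; ring
      · subst h
        simp [qbinom_zero_right, hw.pow_eq_one]; ring
      · obtain ⟨t, rfl⟩ : ∃ t, j = r + t := ⟨j - r, by omega⟩
        simp only [show r ≤ r + t by omega, show r ≤ r + t + 1 by omega, if_true,
          show r + t + 1 - r = t + 1 by omega, show r + t - r = t by omega, qbinom_succ,
          Polynomial.eval_add, Polynomial.eval_mul, Polynomial.eval_pow, Polynomial.eval_X]
        rw [show w ^ (r + t + 1) = w ^ (t + 1) by
          rw [add_assoc, pow_add, hw.pow_eq_one, one_mul]]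
        ring

/-- The `q`-Lucas theorem. -/
theorem eval_qbinom_lucas (hw : IsPrimitiveRoot w r) (hr : 0 < r) (a b d : ℕ) (hb : b < r)
    (hd : d < r) : ∀ c, (qbinom (r * a + b) (r * c + d)).eval w =
      (a.choose c : ℂ) * (qbinom b d).eval w := by
  induction a with
  | zero =>
    intro c
    cases c with
    | zero => simp
    | succ c =>
      rw [qbinom_eq_zero _ _ (by rw [Nat.mul_zero, Nat.mul_succ]; omega)]; simp
  | succ a ih =>
    intro c
    rw [show r * (a + 1) + b = (r * a + b) + r by ring, eval_qbinom_add hw hr, ih]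
    cases c with
    | zero => simp [show ¬ r ≤ d by omega]
    | succ c =>
      rw [if_pos (by rw [Nat.mul_succ]; omega),
        show r * (c + 1) + d - r = r * c + d by rw [Nat.mul_succ]; omega, ih,
        Nat.choose_succ_succ]
      push_cast; ring

theorem eval_qbinom_lucas' (hw : IsPrimitiveRoot w r) (M J a b c d : ℕ)
    (hM : M = r * a + b) (hJ : J = r * c + d) (hb : b < r) (hd : d < r) :
    (qbinom M J).eval w = (a.choose c : ℂ) * (qbinom b d).eval w := by
  subst hM hJ; exact eval_qbinom_lucas hw (by omega) a b d hb hd c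

end Lucas

theorem sievePoly_eval_one (n k : ℕ) (hn : 3 ≤ n) :
    (sievePoly n k).eval 1 * (k + 1) = ((n + k - 1).choose k * (n - 3).choose k : ℕ) := by
  have h := congrArg (Polynomial.eval 1) (sievePoly_mul_qnat n k hn)
  have e : ∀ M J, (qbinom M J).eval 1 = (M.choose J : ℂ) := fun M J => by
    rw [eval_qbinom_lucas' (IsPrimitiveRoot.one) M J M 0 J 0 (by simp) (by simp) (by simp)
      (by simp)]
    simp [qbinom_zero_right]
  rw [Polynomial.eval_mul, Polynomial.eval_mul, e, e] at h
  simpa [qnat, Polynomial.eval_finsetSum] using h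

section
variable {r : ℕ} {w : ℂ}

theorem eval_qnat_succ (hw : IsPrimitiveRoot w r) (hr : 2 ≤ r) (a : ℕ) :
    (qnat (r * a + 1)).eval w = 1 := by
  rw [qnat_add, Polynomial.eval_add, eval_qnat_mul hw hr, Polynomial.eval_mul,
    Polynomial.eval_pow, Polynomial.eval_X, pow_mul, hw.pow_eq_one]
  simp [qnat]

/-- Here `[r a + 1]_q` takes the value `1`, so the value of `sievePoly` is that of its numerator. -/
theorem sievePoly_eval_mul (hw : IsPrimitiveRoot w r) (hr : 2 ≤ r) (m a : ℕ) (hm : 1 ≤ m)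
    (hn : 3 ≤ r * m) : (sievePoly (r * m) (r * a)).eval w =
      (m + a - 1).choose a * (qbinom (r * m - 3) (r * a)).eval w := by
  have h := congrArg (Polynomial.eval w) (sievePoly_mul_qnat (r * m) (r * a) hn)
  rw [Polynomial.eval_mul, Polynomial.eval_mul, eval_qnat_succ hw hr, mul_one] at h
  rw [h, eval_qbinom_lucas' hw (r * m + r * a - 1) (r * a) (m + a - 1) (r - 1) a 0 ?_ (by simp)
    (by omega) (by omega), qbinom_zero_right]
  · simp
  · obtain ⟨t, rfl⟩ : ∃ t, m = t + 1 := ⟨m - 1, by omega⟩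
    rw [show t + 1 + a - 1 = t + a by omega, Nat.mul_succ, Nat.mul_add]; omega

theorem sievePoly_eval_three (hw : IsPrimitiveRoot w r) (hr : 3 ≤ r) (m a : ℕ) (hm : 1 ≤ m) :
    (sievePoly (r * m) (r * a)).eval w = ((m + a - 1).choose a * (m - 1).choose a : ℕ) := by
  have hn : 3 ≤ r * m := by nlinarith
  rw [sievePoly_eval_mul hw (by omega) m a hm hn,
    eval_qbinom_lucas' hw (r * m - 3) (r * a) (m - 1) (r - 3) a 0 ?_ (by simp)
      (by omega) (by omega), qbinom_zero_right]
  · simp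
  · obtain ⟨t, rfl⟩ : ∃ t, m = t + 1 := ⟨m - 1, by omega⟩
    rw [Nat.mul_succ, Nat.add_sub_cancel]; omega

/-- Here `[k+1]_q` may vanish, so the subtraction formula for `sievePoly` is evaluated term by
term: the two terms with `[n+k-1 choose k]_q` vanish by `q`-Lucas, and one factor of the remaining
term does. -/
theorem sievePoly_eval_not_dvd (hw : IsPrimitiveRoot w r) (hr : 3 ≤ r) (m k : ℕ) (hm : 1 ≤ m)
    (hk : ¬ r ∣ k) : (sievePoly (r * m) k).eval w = 0 := by
  set a := k / r with ha
  set b := k % r with hb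
  have hk' : k = r * a + b := (Nat.div_add_mod k r).symm
  have hb0 : 0 < b := Nat.pos_of_ne_zero fun h => hk (Nat.dvd_of_mod_eq_zero h)
  have hbr : b < r := Nat.mod_lt _ (by omega)
  obtain ⟨t, rfl⟩ : ∃ t, m = t + 1 := ⟨m - 1, by omega⟩
  have hA : (qbinom (r * (t + 1) + k - 1) k).eval w = 0 := by
    rw [eval_qbinom_lucas' hw _ _ (t + 1 + a) (b - 1) a b ?_ hk' (by omega) hbr,
      qbinom_eq_zero (b - 1) b (by omega)]
    · simp
    · rw [Nat.mul_add r (t + 1)]; omega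
  -- the first factor vanishes if there is no carry in `k + 1` modulo `r`, the second otherwise
  have hAB : (qbinom (r * (t + 1) + k - 1) (k + 1)).eval w
      * (qbinom (r * (t + 1) - 3) k).eval w = 0 := by
    rcases Nat.lt_or_ge (b + 1) r with h | h
    · rw [eval_qbinom_lucas' hw _ (k + 1) (t + 1 + a) (b - 1) a (b + 1) ?_ (by omega) (by omega) h,
        qbinom_eq_zero (b - 1) (b + 1) (by omega)]
      · simp
      · rw [Nat.mul_add r (t + 1)]; omega
    · rw [eval_qbinom_lucas' hw (r * (t + 1) - 3) k t (r - 3) a b ?_ hk' (by omega) hbr,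
        qbinom_eq_zero (r - 3) b (by omega)]
      · simp
      · rw [Nat.mul_succ]; omega
  simp [sievePoly, hA, hAB]

theorem sievePoly_eval_two_even (hw : IsPrimitiveRoot w 2) (m a : ℕ) (hm : 2 ≤ m) :
    (sievePoly (2 * m) (2 * a)).eval w = ((m + a - 1).choose a * (m - 2).choose a : ℕ) := by
  rw [sievePoly_eval_mul hw le_rfl m a (by omega) (by omega),
    eval_qbinom_lucas' hw (2 * m - 3) (2 * a) (m - 2) 1 a 0 (by omega) (by simp)
      (by omega) (by omega), qbinom_zero_right]
  simp

/-- Here `[k+1]_q` vanishes, and only the first term of the subtraction formula survives. -/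
theorem sievePoly_eval_two_odd (hw : IsPrimitiveRoot w 2) (m a : ℕ) (hm : 2 ≤ m) :
    (sievePoly (2 * m) (2 * a + 1)).eval w = ((m + a).choose (a + 1) * (m - 2).choose a : ℕ) := by
  have hA : (qbinom (2 * m + (2 * a + 1) - 1) (2 * a + 1)).eval w = 0 := by
    rw [eval_qbinom_lucas' hw _ _ (m + a) 0 a 1 (by omega) rfl (by omega) (by omega),
      qbinom_eq_zero 0 1 (by omega)]
    simp
  have hA1 : (qbinom (2 * m + (2 * a + 1) - 1) (2 * a + 1 + 1)).eval w =
      (m + a).choose (a + 1) := by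
    rw [eval_qbinom_lucas' hw _ _ (m + a) 0 (a + 1) 0 (by omega) (by omega) (by omega) (by omega),
      qbinom_zero_right]
    simp
  have hB : (qbinom (2 * m - 3) (2 * a + 1)).eval w = (m - 2).choose a := by
    rw [eval_qbinom_lucas' hw _ _ (m - 2) 1 a 1 (by omega) rfl (by omega) (by omega),
      qbinom_self]
    simp
  simp only [sievePoly, Polynomial.eval_sub, Polynomial.eval_mul, hA, hA1, hB]
  simp

end

/-! ### Noncrossing multisets of arcs on a circle -/

section Arcs
variable {m : ℕ}

/-- The length of the arc from `p.1` clockwise to `p.2` on a circle with `m` marked points, taken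
in `{1, …, m}`: a loop `(i, i)` goes once around the circle and has length `m`. -/
def arcLen (p : ZMod m × ZMod m) : ℕ := (p.2 - p.1 - 1).val + 1

/-- The arc `q` starts strictly inside the arc `p` and ends strictly beyond its end, where positions
are measured clockwise from the start of `p` and may exceed `m`. The relation is not symmetric;
noncrossing configurations avoid it in both directions. -/
def Crosses (p q : ZMod m × ZMod m) : Prop :=
  0 < (q.1 - p.1).val ∧ (q.1 - p.1).val < arcLen p ∧ arcLen p < (q.1 - p.1).val + arcLen q

theorem arcLen_pos (p : ZMod m × ZMod m) : 0 < arcLen p := Nat.succ_pos _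

variable [NeZero m]

theorem arcLen_le (p : ZMod m × ZMod m) : arcLen p ≤ m := ZMod.val_lt _

theorem arcLen_cast (p : ZMod m × ZMod m) : (arcLen p : ZMod m) = p.2 - p.1 := by
  simp [arcLen]

theorem fst_add_arcLen (p : ZMod m × ZMod m) : p.1 + (arcLen p : ZMod m) = p.2 := by
  simp [arcLen_cast]

omit [NeZero m] in
theorem arcLen_eq {i j : ZMod m} {a : ℕ} (h0 : 0 < a) (ha : a ≤ m) (h : i + (a : ZMod m) = j) :
    arcLen (i, j) = a := by
  obtain ⟨b, rfl⟩ : ∃ b, a = b + 1 := ⟨a - 1, by omega⟩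
  have : j - i - 1 = (b : ZMod m) := by rw [← h]; push_cast; ring
  simp only [arcLen, this, ZMod.val_cast_of_lt (show b < m by omega)]

omit [NeZero m] in
theorem val_sub_eq {i j : ZMod m} {a : ℕ} (ha : a < m) (h : i + (a : ZMod m) = j) :
    (j - i).val = a := by
  rw [← h, add_sub_cancel_left, ZMod.val_cast_of_lt ha]

theorem add_val_sub (i j : ZMod m) : i + ((j - i).val : ZMod m) = j := by simp

theorem arcLen_self (i : ZMod m) : arcLen (i, i) = m :=
  arcLen_eq (NeZero.pos m) le_rfl (by simp)

omit [NeZero m] in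
theorem not_crosses_self (p : ZMod m × ZMod m) : ¬ Crosses p p := by
  simp [Crosses]

/-- No two arcs of the multiset `μ` cross, and no arc of `μ` crosses a ray of the multiset `ν`. A
ray ending at `v` is treated like the loop at `v`: an arc crosses it iff `v` lies strictly inside
the arc. Multisets are multiplicity functions. -/
def Compat (μ : ZMod m × ZMod m → ℕ) (ν : ZMod m → ℕ) : Prop :=
  (∀ p q, μ p ≠ 0 → μ q ≠ 0 → ¬ Crosses p q) ∧
    ∀ p v, μ p ≠ 0 → ν v ≠ 0 → ¬ Crosses p (v, v)

/-- The multiset `x.1` of arcs and the multiset `x.2` of rays are compatible, `s i` arcs start at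
`i`, and `e j` arcs or rays end at `j`. A ray is an arc coming in from infinity, so it counts
towards `e` but not towards `s`. -/
def HasMargins (s e : ZMod m → ℕ) (x : (ZMod m × ZMod m → ℕ) × (ZMod m → ℕ)) : Prop :=
  Compat x.1 x.2 ∧ (∀ i, ∑ j, x.1 (i, j) = s i) ∧ ∀ j, ∑ i, x.1 (i, j) + x.2 j = e j

omit [NeZero m] in
theorem exists_ne_zero_of_sum {ι : Type*} [Fintype ι] {f : ι → ℕ} (h : ∑ i, f i ≠ 0) :
    ∃ i, f i ≠ 0 := by
  by_contra! hc
  exact h (Finset.sum_eq_zero fun i _ => hc i)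

/-- The arcs occurring in a configuration join starts to ends with nonzero multiplicity. -/
theorem HasMargins.left_ne_zero {s e : ZMod m → ℕ}
    {x : (ZMod m × ZMod m → ℕ) × (ZMod m → ℕ)} (h : HasMargins s e x)
    {p : ZMod m × ZMod m} (hp : x.1 p ≠ 0) : s p.1 ≠ 0 ∧ e p.2 ≠ 0 := by
  have h1 := Finset.single_le_sum (f := fun j => x.1 (p.1, j)) (fun _ _ => Nat.zero_le _)
    (Finset.mem_univ p.2)
  have h2 := Finset.single_le_sum (f := fun i => x.1 (i, p.2)) (fun _ _ => Nat.zero_le _)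
    (Finset.mem_univ p.1)
  have h3 := h.2.1 p.1
  have h4 := h.2.2 p.2
  simp only [Prod.mk.eta] at h1 h2
  omega

/-- The arc `(i, j)` has minimal length among all arcs from the support of `s` to the support of
`e`. -/
def IsShortest (s e : ZMod m → ℕ) (i j : ZMod m) : Prop :=
  s i ≠ 0 ∧ e j ≠ 0 ∧ ∀ i' j', s i' ≠ 0 → e j' ≠ 0 → arcLen (i, j) ≤ arcLen (i', j')

theorem exists_isShortest {s e : ZMod m → ℕ} (hs : ∑ i, s i ≠ 0) (he : ∑ i, e i ≠ 0) :
    ∃ i j, IsShortest s e i j := by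
  classical
  obtain ⟨i0, hi0⟩ := exists_ne_zero_of_sum hs
  obtain ⟨j0, hj0⟩ := exists_ne_zero_of_sum he
  obtain ⟨p, hp, hmin⟩ := Finset.exists_min_image
    (Finset.univ.filter fun p : ZMod m × ZMod m => s p.1 ≠ 0 ∧ e p.2 ≠ 0) arcLen
    ⟨(i0, j0), by simp [hi0, hj0]⟩
  simp only [Finset.mem_filter, Finset.mem_univ, true_and] at hp hmin
  exact ⟨p.1, p.2, hp.1, hp.2, fun i' j' h1 h2 => hmin (i', j') ⟨h1, h2⟩⟩

theorem arcLen_right_inj {i j j' : ZMod m} (h : arcLen (i, j) = arcLen (i, j')) : j = j' := by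
  have h1 := fst_add_arcLen (i, j)
  rw [h, fst_add_arcLen (i, j')] at h1
  exact h1.symm

theorem arcLen_left_inj {i i' j : ZMod m} (h : arcLen (i, j) = arcLen (i', j)) : i = i' := by
  have h1 := arcLen_cast (i, j)
  have h2 := arcLen_cast (i', j)
  rw [h, h2] at h1
  simpa using h1.symm

/-- Compatibility forces the shortest admissible arc `(i, j)` to occur: otherwise an arc starting
at `i` and an arc or ray ending at `j` would cross. -/
theorem HasMargins.shortest_mem {s e : ZMod m → ℕ}
    {x : (ZMod m × ZMod m → ℕ) × (ZMod m → ℕ)} (h : HasMargins s e x)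
    {i j : ZMod m} (hij : IsShortest s e i j) : x.1 (i, j) ≠ 0 := by
  obtain ⟨hsi, hej, hmin⟩ := hij
  obtain ⟨j1, hj1⟩ := exists_ne_zero_of_sum ((h.2.1 i).trans_ne hsi)
  rcases eq_or_ne j1 j with rfl | hne
  · exact hj1
  have hl : arcLen (i, j) < arcLen (i, j1) :=
    lt_of_le_of_ne (hmin _ _ hsi (h.left_ne_zero hj1).2) fun h' => hne (arcLen_right_inj h').symm
  have hm := arcLen_le (i, j1)
  have hp := arcLen_pos (i, j)
  by_cases hν : x.2 j = 0
  · have h4 := h.2.2 j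
    rw [hν, add_zero] at h4
    obtain ⟨i1, hi1⟩ := exists_ne_zero_of_sum (h4.trans_ne hej)
    rcases eq_or_ne i1 i with rfl | hne'
    · exact hi1
    have hl' : arcLen (i, j) < arcLen (i1, j) :=
      lt_of_le_of_ne (hmin _ _ (h.left_ne_zero hi1).1 hej) fun h' => hne' (arcLen_left_inj h').symm
    have hm' := arcLen_le (i1, j)
    refine absurd ?_ (h.1.1 _ _ hi1 hj1)
    have ht : (i - i1).val = arcLen (i1, j) - arcLen (i, j) := by
      apply val_sub_eq (by omega)
      rw [Nat.cast_sub hl'.le, arcLen_cast, arcLen_cast]; ring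
    refine ⟨?_, ?_, ?_⟩ <;> simp only [ht] <;> omega
  · refine absurd ?_ (h.1.2 _ _ hj1 hν)
    have ht : (j - i).val = arcLen (i, j) :=
      val_sub_eq (by omega) (fst_add_arcLen (i, j))
    refine ⟨?_, ?_, ?_⟩ <;> simp only [ht, arcLen_self] <;> omega

theorem sum_single_row (i j i' : ZMod m) :
    ∑ j', (Pi.single (i, j) 1 : ZMod m × ZMod m → ℕ) (i', j') =
      (Pi.single i 1 : ZMod m → ℕ) i' := by
  by_cases h : i' = i
  · subst h; simp [Pi.single_apply]
  · simp [h]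

theorem sum_single_col (i j j' : ZMod m) :
    ∑ i', (Pi.single (i, j) 1 : ZMod m × ZMod m → ℕ) (i', j') =
      (Pi.single j 1 : ZMod m → ℕ) j' := by
  by_cases h : j' = j
  · subst h; simp [Pi.single_apply]
  · simp [h]

/-- Adding or removing a copy of the shortest admissible arc preserves compatibility, since such
an arc crosses nothing that the margins allow. -/
theorem hasMargins_add {s e : ZMod m → ℕ} {i j : ZMod m}
    {x : (ZMod m × ZMod m → ℕ) × (ZMod m → ℕ)}
    (hij : IsShortest (s + Pi.single i 1) (e + Pi.single j 1) i j) :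
    HasMargins (s + Pi.single i 1) (e + Pi.single j 1) (x.1 + Pi.single (i, j) 1, x.2) ↔
      HasMargins s e x := by
  have key : HasMargins s e x → ∀ p, x.1 p ≠ 0 →
      arcLen (i, j) ≤ arcLen (i, p.2) ∧ arcLen (i, j) ≤ arcLen (p.1, j) := by
    intro h p hp
    have := h.left_ne_zero hp
    constructor
    · exact hij.2.2 _ _ hij.1 (by simp [this.2])
    · exact hij.2.2 _ _ (by simp [this.1]) hij.2.1
  constructor
  · rintro ⟨⟨h1, h2⟩, h3, h4⟩
    refine ⟨⟨fun p q hp hq => h1 p q (by simp [hp]) (by simp [hq]),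
      fun p v hp hv => h2 p v (by simp [hp]) hv⟩, fun i' => ?_, fun j' => ?_⟩
    · have := h3 i'
      simp only [Pi.add_apply, Finset.sum_add_distrib, sum_single_row] at this
      omega
    · have := h4 j'
      simp only [Pi.add_apply, Finset.sum_add_distrib, sum_single_col] at this
      omega
  · intro h
    have hle := arcLen_le (i, j)
    have hcase : ∀ p, (x.1 + Pi.single (i, j) 1 : ZMod m × ZMod m → ℕ) p ≠ 0 →
        x.1 p ≠ 0 ∨ p = (i, j) := by
      intro p hp
      by_cases hpe : p = (i, j)
      · exact Or.inr hpe
      · left; simpa [Pi.single_apply, hpe] using hp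
    have hc1 : ∀ q, x.1 q ≠ 0 → ¬ Crosses (i, j) q := by
      rintro q hq ⟨a1, a2, a3⟩
      have := (key h q hq).2
      rw [arcLen_eq (i := q.1) (j := j) (a := arcLen (i, j) - (q.1 - i).val) (by dsimp only at *; omega)
        (by omega) (by dsimp only at *; rw [Nat.cast_sub a2.le, arcLen_cast]; simp)] at this
      dsimp only at *
      omega
    have hc2 : ∀ q, x.1 q ≠ 0 → ¬ Crosses q (i, j) := by
      rintro q hq ⟨a1, a2, a3⟩
      have := (key h q hq).1
      have hq' := arcLen_le q
      dsimp only at *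
      rw [arcLen_eq (i := i) (j := q.2) (a := arcLen q - (i - q.1).val) (by omega)
        (by omega) (by rw [Nat.cast_sub a2.le, arcLen_cast]; simp)] at this
      omega
    refine ⟨⟨fun p q hp hq => ?_, fun p v hp hv => ?_⟩, fun i' => ?_, fun j' => ?_⟩
    · rcases hcase p hp with hp' | rfl <;> rcases hcase q hq with hq' | rfl
      · exact h.1.1 p q hp' hq'
      · exact hc2 p hp'
      · exact hc1 q hq'
      · exact not_crosses_self _
    · rcases hcase p hp with hp' | rfl
      · exact h.1.2 p v hp' hv
      · rintro ⟨a1, a2, a3⟩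
        dsimp only at *
        have hev : e v ≠ 0 := by have := h.2.2 v; omega
        have := hij.2.2 i v hij.1 (by simp [hev])
        rw [arcLen_eq (i := i) (j := v) (a := (v - i).val) a1 (by omega) (by simp)] at this
        omega
    · simp only [Pi.add_apply, Finset.sum_add_distrib, sum_single_row, h.2.1]
    · have := h.2.2 j'
      simp only [Pi.add_apply, Finset.sum_add_distrib, sum_single_col]
      omega

/-- A compatible configuration of arcs and rays exists and is unique for given margins with at
least as many ends as starts: peel off shortest admissible arcs one at a time. (This is the circular
version of matching parentheses.) -/
theorem existsUnique_hasMargins (a : ℕ) : ∀ s e : ZMod m → ℕ, ∑ i, s i = a →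
    a ≤ ∑ j, e j → ∃! x, HasMargins s e x := by
  induction a with
  | zero =>
    intro s e hs _
    have hs0 : ∀ i, s i = 0 := by simpa using hs
    refine ⟨(0, e), ⟨⟨by simp, by simp⟩, by simp [hs0], by simp⟩, ?_⟩
    rintro ⟨μ, ν⟩ ⟨_, h1, h2⟩
    have hμ : μ = 0 := by
      ext ⟨i, j⟩
      have := h1 i
      rw [hs0, Finset.sum_eq_zero_iff] at this
      exact this j (Finset.mem_univ _)
    subst hμ
    ext j
    · rfl
    · simpa using h2 j
  | succ a ih =>
    intro s e hs he
    obtain ⟨i, j, hij⟩ := exists_isShortest (s := s) (e := e) (by omega) (by omega)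
    obtain ⟨s', rfl⟩ : ∃ s' : ZMod m → ℕ, s = s' + Pi.single i 1 := by
      refine ⟨s - Pi.single i 1, ?_⟩
      ext t
      have := hij.1
      by_cases h : t = i
      · subst h; simp; omega
      · simp [h]
    obtain ⟨e', rfl⟩ : ∃ e' : ZMod m → ℕ, e = e' + Pi.single j 1 := by
      refine ⟨e - Pi.single j 1, ?_⟩
      ext t
      have := hij.2.1
      by_cases h : t = j
      · subst h; simp; omega
      · simp [h]
    simp only [Pi.add_apply, Finset.sum_add_distrib, Finset.sum_pi_single', Finset.mem_univ,
      if_true] at hs he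
    obtain ⟨x, hx, hu⟩ := ih s' e' (by omega) (by omega)
    refine ⟨(x.1 + Pi.single (i, j) 1, x.2), (hasMargins_add hij).2 hx, ?_⟩
    rintro ⟨μ, ν⟩ hy
    have hne := hy.shortest_mem hij
    obtain ⟨μ', rfl⟩ : ∃ μ' : ZMod m × ZMod m → ℕ, μ = μ' + Pi.single (i, j) 1 := by
      refine ⟨μ - Pi.single (i, j) 1, ?_⟩
      ext t
      by_cases h : t = (i, j)
      · subst h; dsimp only at hne; simp; omega
      · simp [h]
    have := hu (μ', ν) ((hasMargins_add (x := (μ', ν)) hij).1 hy)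
    rw [← this]

end Arcs

/-! ### From multisets to sets, and two Vandermonde convolutions -/

section Support
variable {ι : Type*} [DecidableEq ι]

theorem card_piAntidiag_nat (s : Finset ι) (n : ℕ) :
    (Finset.piAntidiag s n).card = Nat.multichoose s.card n := by
  rw [← Finset.card_finsuppAntidiag_nat_eq_multichoose]
  symm
  refine Finset.card_bij (fun f _ => (f : ι → ℕ)) ?_ ?_ ?_
  · intro f hf
    rw [Finset.mem_finsuppAntidiag] at hf
    rw [Finset.mem_piAntidiag]
    exact ⟨hf.1, fun i hi => hf.2 (by simpa using hi)⟩
  · intro f _ g _ h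
    exact DFunLike.coe_injective h
  · intro f hf
    rw [Finset.mem_piAntidiag] at hf
    refine ⟨Finsupp.onFinset s f hf.2, ?_, rfl⟩
    rw [Finset.mem_finsuppAntidiag]
    refine ⟨hf.1, Finsupp.support_onFinset_subset⟩

variable [Fintype ι]

/-- The underlying set of a multiset given by its multiplicity function. -/
def supp (μ : ι → ℕ) : Finset ι := Finset.univ.filter fun i => μ i ≠ 0

omit [DecidableEq ι] in
@[simp] theorem mem_supp {μ : ι → ℕ} {i : ι} : i ∈ supp μ ↔ μ i ≠ 0 := by simp [supp]

/-- A multiset of size `a` whose support outside `F` is `T` is the sum of `T` and an arbitrary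
multiset of size `a - |T|` on `F ∪ T`. -/
theorem card_supp_fiber (F T : Finset ι) (hT : Disjoint T F) (a : ℕ) (ha : T.card ≤ a) :
    ((Finset.piAntidiag Finset.univ a).filter fun μ : ι → ℕ => supp μ \ F = T).card =
      Nat.multichoose (F.card + T.card) (a - T.card) := by
  have hdisj := Finset.disjoint_left.1 hT
  have hind : ∑ i, (if i ∈ T then 1 else 0) = T.card := by simp
  rw [← Finset.card_union_of_disjoint hT.symm, ← card_piAntidiag_nat]
  symm
  refine Finset.card_bij (fun f _ i => f i + if i ∈ T then 1 else 0) ?_ ?_ ?_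
  · intro f hf
    rw [Finset.mem_piAntidiag] at hf
    have hs : ∑ i, f i = a - T.card := by
      rw [← hf.1]
      exact (Finset.sum_subset (Finset.subset_univ _) fun i _ hi => by
        by_contra h; exact hi (hf.2 i h)).symm
    rw [Finset.mem_filter, Finset.mem_piAntidiag]
    refine ⟨⟨?_, by simp⟩, ?_⟩
    · rw [Finset.sum_add_distrib, hs, hind]; omega
    · ext i
      have h1 := hf.2 i
      have h2 := @hdisj i
      rw [Finset.mem_union] at h1
      simp only [Finset.mem_sdiff, mem_supp]
      by_cases hi : i ∈ T
      · simp [hi, h2 hi]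
      · simp only [hi, if_false, add_zero, iff_false]; tauto
  · intro f _ g _ h
    ext i
    simpa using congrFun h i
  · intro μ hμ
    rw [Finset.mem_filter, Finset.mem_piAntidiag] at hμ
    have hm : ∀ i ∈ T, μ i ≠ 0 := fun i hi => by
      rw [← hμ.2, Finset.mem_sdiff, mem_supp] at hi
      exact hi.1
    have hback : ∀ i, (μ i - if i ∈ T then 1 else 0) + (if i ∈ T then 1 else 0) = μ i := by
      intro i
      by_cases hi : i ∈ T
      · have := hm i hi
        simp only [hi, if_true]; omega
      · simp [hi]
    have hz : ∀ i, μ i ≠ 0 → i ∈ F ∪ T := by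
      intro i hi
      rw [Finset.mem_union]
      by_cases hF : i ∈ F
      · exact Or.inl hF
      · right; rw [← hμ.2, Finset.mem_sdiff, mem_supp]; exact ⟨hi, hF⟩
    refine ⟨fun i => μ i - if i ∈ T then 1 else 0, ?_, funext hback⟩
    rw [Finset.mem_piAntidiag]
    have hz' : ∀ i, (μ i - if i ∈ T then 1 else 0) ≠ 0 → i ∈ F ∪ T :=
      fun i hi => hz i (by omega)
    refine ⟨?_, hz'⟩
    rw [Finset.sum_subset (Finset.subset_univ _) fun i _ hi => by
      by_contra h; exact hi (hz' i h)]
    have h3 := hμ.1.1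
    rw [← Finset.sum_congr rfl fun i _ => hback i, Finset.sum_add_distrib, hind] at h3
    omega

open Classical in
/-- Multisets subject to a condition on the part `T` of their support outside `F` only, counted
according to the size of `T`. -/
theorem card_by_support (F : Finset ι) (Q : Finset ι → Prop) (a : ℕ) :
    ((Finset.piAntidiag Finset.univ a).filter fun μ : ι → ℕ => Q (supp μ \ F)).card =
      ∑ b ∈ Finset.range (a + 1),
        (Finset.univ.filter fun T : Finset ι => Disjoint T F ∧ Q T ∧ T.card = b).card *
          Nat.multichoose (F.card + b) (a - b) := by
  set t := Finset.univ.filter fun T : Finset ι => Disjoint T F ∧ Q T ∧ T.card ≤ a with ht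
  have hmaps : ∀ μ ∈ (Finset.piAntidiag Finset.univ a).filter fun μ : ι → ℕ => Q (supp μ \ F),
      supp μ \ F ∈ t := by
    intro μ hμ
    rw [Finset.mem_filter, Finset.mem_piAntidiag] at hμ
    simp only [ht, Finset.mem_filter, Finset.mem_univ, true_and]
    refine ⟨Finset.sdiff_disjoint, hμ.2, ?_⟩
    rw [← hμ.1.1, Finset.card_eq_sum_ones]
    refine (Finset.sum_le_sum (g := μ) fun i hi => ?_).trans
      (Finset.sum_le_sum_of_subset (Finset.subset_univ _))
    rw [Finset.mem_sdiff, mem_supp] at hi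
    omega
  rw [Finset.card_eq_sum_card_fiberwise (f := fun μ => supp μ \ F) (t := t) hmaps]
  have h1 : ∀ T ∈ t, (((Finset.piAntidiag Finset.univ a).filter
      fun μ : ι → ℕ => Q (supp μ \ F)).filter fun μ => supp μ \ F = T).card =
      Nat.multichoose (F.card + T.card) (a - T.card) := by
    intro T hT
    simp only [ht, Finset.mem_filter, Finset.mem_univ, true_and] at hT
    rw [← card_supp_fiber F T hT.1 a hT.2.2]
    congr 1
    ext μ
    simp only [Finset.mem_filter]
    constructor
    · tauto
    · rintro ⟨h, rfl⟩; exact ⟨⟨h, hT.2.1⟩, rfl⟩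
  rw [Finset.sum_congr rfl h1, ← Finset.sum_fiberwise_of_maps_to (g := Finset.card)
    (t := Finset.range (a + 1)) (fun T hT => by
      simp only [ht, Finset.mem_filter] at hT; simp; omega)]
  refine Finset.sum_congr rfl fun b hb => ?_
  rw [Finset.sum_congr rfl (g := fun _ => Nat.multichoose (F.card + b) (a - b)) fun T hT => by
    rw [(Finset.mem_filter.1 hT).2], Finset.sum_const, smul_eq_mul]
  congr 2
  ext T
  simp only [ht, Finset.mem_filter, Finset.mem_univ, true_and]
  rw [Finset.mem_range] at hb
  constructor
  · rintro ⟨⟨h1, h2, _⟩, h3⟩; exact ⟨h1, h2, h3⟩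
  · rintro ⟨h1, h2, h3⟩; exact ⟨⟨h1, h2, by omega⟩, h3⟩

end Support

/-- The system expressing multiset counts through set counts is unitriangular. -/
theorem triangular_unique (M : ℕ) (x y : ℕ → ℕ)
    (h : ∀ a, ∑ b ∈ Finset.range (a + 1), x b * Nat.multichoose (M + b) (a - b) =
      ∑ b ∈ Finset.range (a + 1), y b * Nat.multichoose (M + b) (a - b)) (a : ℕ) :
    x a = y a := by
  induction a using Nat.strong_induction_on with
  | _ a ih =>
    have := h a
    rw [Finset.sum_range_succ, Finset.sum_range_succ,
      Finset.sum_congr rfl fun b hb => by rw [ih b (Finset.mem_range.1 hb)]] at this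
    simpa using this

/-- The trinomial revision that turns each term of the two sums below into a multiple of a term
of the Vandermonde convolution. -/
theorem choose_mul_choose_aux (M a b : ℕ) (hb : b ≤ a) :
    (M + b).choose b * Nat.multichoose (M + 1 + b) (a - b) = (M + a).choose a * a.choose b := by
  obtain ⟨c, rfl⟩ : ∃ c, a = b + c := ⟨a - b, by omega⟩
  rw [Nat.multichoose_eq, show b + c - b = c by omega, show M + 1 + b + c - 1 = M + (b + c) by omega,
    Nat.choose_mul (n := M + (b + c)) (k := b + c) (s := b) (by omega),
    show M + (b + c) - b = M + c by omega, show b + c - b = c by omega]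
  have h := Nat.choose_mul (n := M + (b + c)) (k := M + b) (s := b) (by omega)
  rw [show M + (b + c) - b = M + c by omega, show M + b - b = M by omega,
    ← Nat.choose_symm (n := M + (b + c)) (k := M + b) (by omega),
    ← Nat.choose_symm (n := M + c) (k := M) (by omega),
    show M + (b + c) - (M + b) = c by omega, show M + c - M = c by omega] at h
  rw [← h, mul_comm]

theorem vandermonde_arcs (m a : ℕ) (hm : 1 ≤ m) :
    ∑ b ∈ Finset.range (a + 1), ((m + b - 1).choose b * (m - 1).choose b) *
      Nat.multichoose (m + b) (a - b) = Nat.multichoose m a * Nat.multichoose m a := by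
  obtain ⟨M, rfl⟩ : ∃ M, m = M + 1 := ⟨m - 1, by omega⟩
  have hv := Nat.add_choose_eq M a a
  rw [Finset.Nat.sum_antidiagonal_eq_sum_range_succ (fun i j => M.choose i * a.choose j)] at hv
  rw [Nat.multichoose_eq, show M + 1 + a - 1 = M + a by omega]
  conv_rhs => arg 2; rw [hv]
  rw [Finset.mul_sum]
  refine Finset.sum_congr rfl fun b hb => ?_
  rw [Finset.mem_range] at hb
  have h := choose_mul_choose_aux M a b (by omega)
  rw [Nat.choose_symm (by omega), show M + 1 + b - 1 = M + b by omega, Nat.add_sub_cancel]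
  linear_combination M.choose b * h

theorem vandermonde_loops (m a : ℕ) (hm : 2 ≤ m) :
    ∑ b ∈ Finset.range (a + 1), ((m + b).choose (b + 1) * (m - 2).choose b) *
      Nat.multichoose (m + 1 + b) (a - b) = Nat.multichoose m a * Nat.multichoose m (a + 1) := by
  obtain ⟨M, rfl⟩ : ∃ M, m = M + 2 := ⟨m - 2, by omega⟩
  rw [Nat.multichoose_eq, Nat.multichoose_eq, show M + 2 + a - 1 = M + (a + 1) by omega,
    show M + 2 + (a + 1) - 1 = M + 1 + (a + 1) by omega]
  conv_rhs => rw [Nat.add_choose_eq M (a + 1) a, Finset.Nat.sum_antidiagonal_eq_sum_range_succ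
    (fun i j => M.choose i * (a + 1).choose j), Finset.sum_mul]
  refine Finset.sum_congr rfl fun b hb => ?_
  rw [Finset.mem_range] at hb
  have h := choose_mul_choose_aux (M + 1) (a + 1) (b + 1) (by omega)
  rw [show a + 1 - (b + 1) = a - b by omega] at h
  rw [← Nat.choose_symm (n := a + 1) (k := a - b) (by omega),
    show a + 1 - (a - b) = b + 1 by omega, show M + 2 + b = M + 1 + (b + 1) by omega,
    show M + 2 - 2 = M by omega, show M + 2 + 1 + b = M + 1 + 1 + (b + 1) by omega]
  linear_combination M.choose b * h

/-! ### Counting noncrossing sets of arcs -/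

section Counting
variable {m : ℕ} [NeZero m]

open Classical in
/-- Compatible configurations of `a` arcs and `c` rays are in bijection with their margins, that
is, with pairs of multisets of vertices of sizes `a` and `a + c`. -/
theorem card_compat (a c : ℕ) :
    ((Finset.piAntidiag Finset.univ a ×ˢ Finset.piAntidiag Finset.univ c).filter
      fun x : (ZMod m × ZMod m → ℕ) × (ZMod m → ℕ) => Compat x.1 x.2).card =
      Nat.multichoose m a * Nat.multichoose m (a + c) := by
  have hcard : ∀ b, (Finset.piAntidiag (Finset.univ : Finset (ZMod m)) b).card =
      Nat.multichoose m b := fun b => by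
    rw [card_piAntidiag_nat, Finset.card_univ, ZMod.card]
  rw [← hcard, ← hcard, ← Finset.card_product]
  have hrow : ∀ μ : ZMod m × ZMod m → ℕ, ∑ i, ∑ j, μ (i, j) = ∑ p, μ p := fun μ =>
    (Fintype.sum_prod_type μ).symm
  have hcol : ∀ μ : ZMod m × ZMod m → ℕ, ∑ j, ∑ i, μ (i, j) = ∑ p, μ p := fun μ =>
    (Fintype.sum_prod_type_right μ).symm
  refine Finset.card_bij
    (fun x _ => (fun i => ∑ j, x.1 (i, j), fun j => ∑ i, x.1 (i, j) + x.2 j)) ?_ ?_ ?_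
  · rintro ⟨μ, ν⟩ hx
    simp only [Finset.mem_filter, Finset.mem_product, Finset.mem_piAntidiag, Finset.mem_univ,
      implies_true, and_true] at hx ⊢
    have e1 : ∑ p, μ p = a := hx.1.1
    have e2 : ∑ j, ν j = c := hx.1.2
    exact ⟨(hrow μ).trans e1, by rw [Finset.sum_add_distrib, hcol, e1, e2]⟩
  · rintro ⟨μ, ν⟩ hx ⟨μ', ν'⟩ hx' h
    simp only [Finset.mem_filter, Finset.mem_product, Finset.mem_piAntidiag, Finset.mem_univ,
      implies_true, and_true] at hx hx'
    rw [Prod.mk.injEq] at h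
    have h1 : ∑ i, ∑ j, μ (i, j) = a := (hrow μ).trans hx.1.1
    have h2 : a ≤ ∑ j, (∑ i, μ (i, j) + ν j) := by
      rw [Finset.sum_add_distrib, hcol, show ∑ p, μ p = a from hx.1.1]; omega
    obtain ⟨y, _, hu⟩ := existsUnique_hasMargins a _ _ h1 h2
    rw [hu (μ, ν) ⟨hx.2, fun _ => rfl, fun _ => rfl⟩, hu (μ', ν')
      ⟨hx'.2, fun i => (congrFun h.1 i).symm, fun j => (congrFun h.2 j).symm⟩]
  · rintro ⟨s, e⟩ hse
    simp only [Finset.mem_product, Finset.mem_piAntidiag, Finset.mem_univ,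
      implies_true, and_true] at hse
    have e1 : ∑ i, s i = a := hse.1
    have e2 : ∑ j, e j = a + c := hse.2
    obtain ⟨⟨μ, ν⟩, ⟨hc, h1, h2⟩, _⟩ := existsUnique_hasMargins a s e e1 (by omega)
    simp only at h1 h2 hc
    have h3 : ∑ p, μ p = a := by
      rw [← hrow, Finset.sum_congr rfl fun i _ => h1 i, e1]
    have h4 : ∑ p, μ p + ∑ j, ν j = a + c := by
      rw [← hcol, ← Finset.sum_add_distrib, Finset.sum_congr rfl fun i _ => h2 i, e2]
    refine ⟨(μ, ν), ?_, ?_⟩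
    · simp only [Finset.mem_filter, Finset.mem_product, Finset.mem_piAntidiag, Finset.mem_univ,
        implies_true, and_true]
      exact ⟨⟨h3, show ∑ j, ν j = c by omega⟩, hc⟩
    · simp only [Prod.mk.injEq]
      exact ⟨funext h1, funext h2⟩

omit [NeZero m] in
theorem rotate_crosses (v : ZMod m) (p q : ZMod m × ZMod m) :
    Crosses (p + (v, v)) (q + (v, v)) ↔ Crosses p q := by
  simp [Crosses, arcLen]

/-- A noncrossing set of arcs. -/
def NC (T : Finset (ZMod m × ZMod m)) : Prop := ∀ p ∈ T, ∀ q ∈ T, ¬ Crosses p q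

variable (m) in
/-- The arcs of length `1`; for `m = 1` this is the loop. They cross nothing. -/
def edges : Finset (ZMod m × ZMod m) := Finset.univ.image fun i => (i, i + 1)

theorem mem_edges {p : ZMod m × ZMod m} : p ∈ edges m ↔ p.2 = p.1 + 1 := by
  simp only [edges, Finset.mem_image, Finset.mem_univ, true_and]
  constructor
  · rintro ⟨i, rfl⟩; rfl
  · intro h; exact ⟨p.1, by rw [← h]⟩

theorem card_edges : (edges m).card = m := by
  rw [edges, Finset.card_image_of_injective _ fun i j h => (Prod.mk.inj h).1, Finset.card_univ,
    ZMod.card]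

theorem mem_edges_iff {p : ZMod m × ZMod m} : p ∈ edges m ↔ arcLen p = 1 := by
  rw [mem_edges]
  constructor
  · intro h
    exact arcLen_eq (i := p.1) (j := p.2) (by omega) (NeZero.pos m) (by rw [h]; simp)
  · intro h
    rw [← fst_add_arcLen p, h]; simp

theorem not_crosses_edge {p q : ZMod m × ZMod m} (h : p ∈ edges m ∨ q ∈ edges m) :
    ¬ Crosses p q := by
  rw [mem_edges_iff, mem_edges_iff] at h
  unfold Crosses
  omega

/-- `(v, v)` crosses `p` iff `p` crosses `(v, v)`: both say that `v` lies strictly inside `p` or,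
equivalently, that `p` starts strictly inside the loop at `v` and ends beyond its end. -/
theorem crosses_loop_comm (v : ZMod m) (p : ZMod m × ZMod m) :
    Crosses (v, v) p ↔ Crosses p (v, v) := by
  have h1 := ZMod.val_lt (p.1 - v)
  have h2 : (v - p.1).val = if p.1 - v = 0 then 0 else m - (p.1 - v).val := by
    rw [← neg_sub, ZMod.neg_val]
  have h3 := arcLen_le p
  rcases eq_or_ne (p.1 - v) 0 with h | h
  · simp [Crosses, h2, h]
  · have h4 : (p.1 - v).val ≠ 0 := by rwa [Ne, ZMod.val_eq_zero]
    rw [if_neg h] at h2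
    simp only [Crosses, h2, arcLen_self]
    omega

theorem crosses_loops {v w : ZMod m} (h : v ≠ w) : Crosses (v, v) (w, w) := by
  have h1 := ZMod.val_lt (w - v)
  have h4 : (w - v).val ≠ 0 := by rw [Ne, ZMod.val_eq_zero, sub_eq_zero]; exact h.symm
  simp only [Crosses, arcLen_self]
  omega

/-- The noncrossing sets of `b` arcs, none of them an edge. -/
def IsDiss (T : Finset (ZMod m × ZMod m)) (b : ℕ) : Prop :=
  Disjoint T (edges m) ∧ NC T ∧ T.card = b

open Classical in
/-- Noncrossing multisets of arcs are counted by `multichoose m a ^ 2`, and their supports may be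
completed by edges at will; inverting this relation gives the number of noncrossing sets without
edges. -/
theorem card_isDiss (hm : 1 ≤ m) (b : ℕ) :
    (Finset.univ.filter fun T : Finset (ZMod m × ZMod m) => IsDiss T b).card =
      (m + b - 1).choose b * (m - 1).choose b := by
  refine triangular_unique m (fun b => (Finset.univ.filter
    fun T : Finset (ZMod m × ZMod m) => IsDiss T b).card)
    (fun b => (m + b - 1).choose b * (m - 1).choose b) (fun a => ?_) b
  rw [vandermonde_arcs m a hm]
  have h := card_by_support (edges m) NC a
  rw [card_edges] at h
  trans ((Finset.piAntidiag Finset.univ a).filter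
    fun μ : ZMod m × ZMod m → ℕ => NC (supp μ \ edges m)).card
  · rw [h]
    refine Finset.sum_congr rfl fun x _ => ?_
    congr 2
    ext T
    rw [Finset.mem_filter, Finset.mem_filter]
    rfl
  have h2 := card_compat (m := m) a 0
  rw [add_zero] at h2
  rw [← h2]
  refine Finset.card_bij (fun μ _ => (μ, 0)) ?_ ?_ ?_
  · intro μ hμ
    rw [Finset.mem_filter] at hμ
    simp only [Finset.mem_filter, Finset.mem_product, hμ.1, true_and]
    refine ⟨by simp, fun p q hp hq hc => ?_, by simp⟩
    by_cases he : p ∈ edges m ∨ q ∈ edges m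
    · exact not_crosses_edge he hc
    · rw [not_or] at he
      exact hμ.2 p (by simp [hp, he.1]) q (by simp [hq, he.2]) hc
  · intro μ _ μ' _ h
    exact (Prod.mk.inj h).1
  · rintro ⟨μ, ν⟩ hx
    simp only [Finset.mem_filter, Finset.mem_product, Finset.piAntidiag_zero,
      Finset.mem_singleton] at hx
    refine ⟨μ, ?_, by rw [hx.1.2]⟩
    rw [Finset.mem_filter]
    refine ⟨hx.1.1, fun p hp q hq => hx.2.1 p q ?_ ?_⟩
    · simp at hp; exact hp.1
    · simp at hq; exact hq.1

/-- The sets `T` of `b` arcs such that `T ∪ {(v,v)}` has `b + 1` elements, is noncrossing and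
contains no edge. -/
def IsLoopDiss (v : ZMod m) (T : Finset (ZMod m × ZMod m)) (b : ℕ) : Prop :=
  Disjoint T (insert (v, v) (edges m)) ∧ NC (insert (v, v) T) ∧ T.card = b

theorem nc_insert_loop {v : ZMod m} {T : Finset (ZMod m × ZMod m)} :
    NC (insert (v, v) T) ↔ NC T ∧ ∀ p ∈ T, ¬ Crosses p (v, v) := by
  unfold NC
  simp only [Finset.forall_mem_insert, crosses_loop_comm, not_crosses_self]
  simp only [not_false_eq_true, true_and]
  constructor
  · rintro ⟨h1, h2⟩; exact ⟨fun p hp => (h2 p hp).2, h1⟩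
  · rintro ⟨h1, h2⟩; exact ⟨h2, fun p hp => ⟨h2 p hp, h1 p hp⟩⟩

theorem loop_not_mem_edges (hm : 2 ≤ m) (v : ZMod m) : (v, v) ∉ edges m := by
  rw [mem_edges_iff, arcLen_self]; omega

open Classical in
/-- As for `card_isDiss`, starting from configurations with exactly one ray. Both the edges and
the loop at the end of the ray cross nothing, so they occur with arbitrary multiplicity. -/
theorem sum_card_isLoopDiss (hm : 2 ≤ m) (b : ℕ) :
    ∑ v : ZMod m, (Finset.univ.filter fun T => IsLoopDiss v T b).card =
      (m + b).choose (b + 1) * (m - 2).choose b := by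
  refine triangular_unique (m + 1) (fun b => ∑ v : ZMod m, (Finset.univ.filter
    fun T => IsLoopDiss v T b).card)
    (fun b => (m + b).choose (b + 1) * (m - 2).choose b) (fun a => ?_) b
  rw [vandermonde_loops m a hm]
  simp only [Finset.sum_mul]
  rw [Finset.sum_comm]
  have h : ∀ v : ZMod m, ∑ b ∈ Finset.range (a + 1),
      (Finset.univ.filter fun T => IsLoopDiss v T b).card * Nat.multichoose (m + 1 + b) (a - b) =
      ((Finset.piAntidiag Finset.univ a).filter fun μ : ZMod m × ZMod m → ℕ =>
        NC (insert (v, v) (supp μ \ insert (v, v) (edges m)))).card := by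
    intro v
    have h := card_by_support (insert (v, v) (edges m)) (fun T => NC (insert (v, v) T)) a
    rw [Finset.card_insert_of_notMem (loop_not_mem_edges hm v), card_edges] at h
    rw [h]
    refine Finset.sum_congr rfl fun x _ => ?_
    congr 2
    ext T
    rw [Finset.mem_filter, Finset.mem_filter]
    rfl
  rw [Finset.sum_congr rfl fun v _ => h v, ← card_compat, ← Finset.card_sigma]
  refine Finset.card_bij (fun x _ => (x.2, Pi.single x.1 1)) ?_ ?_ ?_
  · rintro ⟨v, μ⟩ hμ
    simp only [Finset.mem_sigma, Finset.mem_univ, true_and, Finset.mem_filter] at hμ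
    obtain ⟨h1, h2⟩ := hμ
    simp only [Finset.mem_filter, Finset.mem_product, h1, true_and]
    have key : ∀ p, μ p ≠ 0 → p ∈ edges m ∨
        p ∈ insert (v, v) (supp μ \ insert (v, v) (edges m)) := by
      intro p hp
      simp only [Finset.mem_insert, Finset.mem_sdiff, mem_supp]
      tauto
    refine ⟨by simp [Finset.mem_piAntidiag], fun p q hp hq hc => ?_, fun p w hp hw hc => ?_⟩
    · rcases key p hp with h | hp
      · exact not_crosses_edge (Or.inl h) hc
      rcases key q hq with h | hq
      · exact not_crosses_edge (Or.inr h) hc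
      exact h2 p hp q hq hc
    · obtain rfl : w = v := by
        by_contra hne; simp [hne] at hw
      rcases key p hp with h | hp
      · exact not_crosses_edge (Or.inl h) hc
      exact h2 p hp _ (Finset.mem_insert_self _ _) hc
  · rintro ⟨v, μ⟩ _ ⟨v', μ'⟩ _ h
    simp only [Prod.mk.injEq] at h
    obtain ⟨rfl, h⟩ := h
    have := congrFun h v
    obtain rfl : v = v' := by
      by_contra hne; simp [hne] at this
    rfl
  · rintro ⟨μ, ν⟩ hx
    simp only [Finset.mem_filter, Finset.mem_product, Finset.mem_piAntidiag] at hx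
    obtain ⟨⟨⟨h1, h2⟩, h3, -⟩, h4⟩ := hx
    obtain ⟨v, hv⟩ := exists_ne_zero_of_sum (h3.trans_ne one_ne_zero)
    have hν : ν = Pi.single v 1 := by
      have h5 := Finset.add_sum_erase Finset.univ ν (Finset.mem_univ v)
      rw [h3] at h5
      have h6 : ∑ x ∈ Finset.univ.erase v, ν x = 0 := by omega
      rw [Finset.sum_eq_zero_iff] at h6
      funext w
      rcases eq_or_ne w v with rfl | hw
      · simp; omega
      · rw [h6 w (by simp [hw])]; simp [hw]
    refine ⟨⟨v, μ⟩, ?_, by rw [hν]⟩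
    simp only [Finset.mem_sigma, Finset.mem_univ, true_and, Finset.mem_filter,
      Finset.mem_piAntidiag]
    refine ⟨⟨h1, by simp⟩, ?_⟩
    rw [nc_insert_loop]
    refine ⟨fun p hp q hq => h4.1 p q ?_ ?_, fun p hp => h4.2 p v ?_ hv⟩
    · simp at hp; exact hp.1
    · simp at hq; exact hq.1
    · simp at hp; exact hp.1

open Classical in
/-- By rotational symmetry all vertices contribute equally to `sum_card_isLoopDiss`. -/
theorem card_isLoopDiss (hm : 2 ≤ m) (b : ℕ) :
    m * (Finset.univ.filter fun T => IsLoopDiss (0 : ZMod m) T b).card =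
      (m + b).choose (b + 1) * (m - 2).choose b := by
  rw [← sum_card_isLoopDiss hm b]
  have h : ∀ v : ZMod m, (Finset.univ.filter fun T => IsLoopDiss v T b).card =
      (Finset.univ.filter fun T => IsLoopDiss (0 : ZMod m) T b).card := by
    intro v
    symm
    have hN : ∀ T : Finset (ZMod m × ZMod m), NC (T.map (addRightEmbedding (v, v))) ↔ NC T := by
      intro T
      simp only [NC, Finset.forall_mem_map, addRightEmbedding_apply, rotate_crosses]
    have hI : (insert (v, v) (edges m)) = (insert (0, 0) (edges m)).map
        (addRightEmbedding (v, v)) := by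
      ext p
      simp only [Finset.map_insert, Finset.mem_insert, Finset.mem_map, addRightEmbedding_apply,
        mem_edges]
      constructor
      · rintro (rfl | h)
        · left; simp
        · right
          exact ⟨p - (v, v), by simp [h]; ring, by simp⟩
      · rintro (rfl | ⟨q, h, rfl⟩)
        · left; simp
        · right; simp [h]; ring
    have hL : ∀ T : Finset (ZMod m × ZMod m),
        IsLoopDiss v (T.map (addRightEmbedding (v, v))) b ↔ IsLoopDiss 0 T b := by
      intro T
      have : insert (v, v) (T.map (addRightEmbedding (v, v))) =
          (insert (0, 0) T).map (addRightEmbedding (v, v)) := by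
        simp [Finset.map_insert]
      rw [IsLoopDiss, IsLoopDiss, this, hN, hI, Finset.disjoint_map, Finset.card_map]
    refine Finset.card_bij (fun T _ => T.map (addRightEmbedding (v, v))) ?_ ?_ ?_
    · intro T hT
      simpa [hL] using hT
    · intro T _ T' _ h
      exact Finset.map_injective _ h
    · intro T hT
      have hT' : (T.map (addRightEmbedding (-(v, v)))).map (addRightEmbedding (v, v)) = T := by
        rw [Finset.map_map]
        convert Finset.map_refl using 2
        ext p <;> simp
      refine ⟨T.map (addRightEmbedding (-(v, v))), ?_, hT'⟩
      have h := (hL (T.map (addRightEmbedding (-(v, v)))))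
      rw [hT'] at h
      simpa [h] using hT
  rw [Finset.sum_congr rfl fun v _ => h v, Finset.sum_const, Finset.card_univ, ZMod.card,
    smul_eq_mul]

open Classical in
/-- A noncrossing set contains at most one loop, since two different loops cross; so sets with a
loop are sorted by its vertex. -/
theorem card_isDiss_loop (hm : 2 ≤ m) (b : ℕ) :
    (Finset.univ.filter fun T : Finset (ZMod m × ZMod m) =>
      IsDiss T (b + 1) ∧ ∃ v, (v, v) ∈ T).card =
      (m + b).choose (b + 1) * (m - 2).choose b := by
  rw [← sum_card_isLoopDiss hm b, ← Finset.card_sigma]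
  symm
  refine Finset.card_bij (fun x _ => insert (x.1, x.1) x.2) ?_ ?_ ?_
  · rintro ⟨v, T⟩ h
    simp only [Finset.mem_sigma, Finset.mem_univ, true_and, Finset.mem_filter] at h ⊢
    obtain ⟨h1, h2, h3⟩ := h
    rw [Finset.disjoint_insert_right] at h1
    refine ⟨⟨?_, h2, ?_⟩, v, by simp⟩
    · rw [Finset.disjoint_insert_left]
      exact ⟨loop_not_mem_edges hm v, h1.2⟩
    · rw [Finset.card_insert_of_notMem h1.1, h3]
  · rintro ⟨v, T⟩ h ⟨v', T'⟩ h' he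
    simp only [Finset.mem_sigma, Finset.mem_univ, true_and, Finset.mem_filter] at h h' he
    obtain rfl : v = v' := by
      by_contra hne
      exact h.2.1 (v, v) (by simp) (v', v') (by rw [he]; simp) (crosses_loops hne)
    have h1 := (Finset.disjoint_insert_right.1 h.1).1
    have h1' := (Finset.disjoint_insert_right.1 h'.1).1
    rw [← Finset.erase_insert h1, he, Finset.erase_insert h1']
  · intro T h
    simp only [Finset.mem_univ, true_and, Finset.mem_filter] at h
    obtain ⟨⟨h1, h2, h3⟩, v, hv⟩ := h
    refine ⟨⟨v, T.erase (v, v)⟩, ?_, Finset.insert_erase hv⟩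
    simp only [Finset.mem_sigma, Finset.mem_univ, true_and, Finset.mem_filter]
    refine ⟨?_, ?_, ?_⟩
    · rw [Finset.disjoint_insert_right]
      exact ⟨by simp, h1.mono_left (Finset.erase_subset _ _)⟩
    · simpa [Finset.insert_erase hv] using h2
    · simp [Finset.card_erase_of_mem hv, h3]

end Counting

/-! ### Dissections and contraction of a side -/

section Transfer

theorem card_transfer {α β : Type*} {P : α → Prop} {Q : β → Prop} (f : α → β) (g : β → α)
    (hf : ∀ x, P x → Q (f x)) (hg : ∀ y, Q y → P (g y)) (hgf : ∀ x, P x → g (f x) = x)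
    (hfg : ∀ y, Q y → f (g y) = y) : Nat.card {x // P x} = Nat.card {y // Q y} :=
  Nat.card_congr
    { toFun := fun x => ⟨f x.1, hf x.1 x.2⟩
      invFun := fun y => ⟨g y.1, hg y.1 y.2⟩
      left_inv := fun x => Subtype.ext (hgf x.1 x.2)
      right_inv := fun y => Subtype.ext (hfg y.1 y.2) }

/-- `D` is a noncrossing dissection of the `n`-gon with vertex set `ZMod n`. -/
def IsDissection {n : ℕ} (D : ZMod n → ZMod n → Prop) : Prop :=
  (∀ i j, D i j → D j i) ∧ (∀ i j, D i j → i ≠ j ∧ j ≠ i + 1 ∧ i ≠ j + 1) ∧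
    ∀ i j a b, D i j → D a b → ¬ crossE i j a b

/-- The number of diagonals of `D`. -/
noncomputable def numDiag {n : ℕ} (D : ZMod n → ZMod n → Prop) : ℕ :=
  Nat.card {p : ZMod n × ZMod n // p.1.val < p.2.val ∧ D p.1 p.2}

open Classical in
theorem numDiag_eq_card {n : ℕ} [NeZero n] (D : ZMod n → ZMod n → Prop) : numDiag D =
    (Finset.univ.filter fun p : ZMod n × ZMod n => p.1.val < p.2.val ∧ D p.1 p.2).card := by
  rw [numDiag, Nat.card_eq_fintype_card, Fintype.card_subtype]

section All
variable {n : ℕ} [NeZero n]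

/-- The arc from `x` to `y` after identifying the vertices `n` and `0` of the `(n+1)`-gon. It is
used for `x.val < y.val` only. -/
def contract (x y : ZMod (n + 1)) : ZMod n × ZMod n := (x.val, y.val)

/-- Inverse of `contract`, for arcs `p` not containing the vertex `0` strictly inside: the arc is
drawn on the path `0, …, n`, and so may end at `n`. -/
def expand (p : ZMod n × ZMod n) : ZMod (n + 1) × ZMod (n + 1) :=
  ((p.1.val : ℕ), (p.1.val + arcLen p : ℕ))

/-- An arc does not contain `0` strictly inside iff it can be drawn on the path `0, …, n`. -/
theorem visible_iff (p : ZMod n × ZMod n) :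
    ¬ Crosses p (0, 0) ↔ p.1.val + arcLen p ≤ n := by
  have h2 : (0 - p.1).val = if p.1 = 0 then 0 else n - p.1.val := by
    rw [zero_sub, ZMod.neg_val]
  have h1 := ZMod.val_lt p.1
  have h3 := arcLen_le p
  have h4 := arcLen_pos p
  simp only [Crosses, h2, arcLen_self]
  split_ifs with h
  · simp [h, h3]
  · have h5 : p.1.val ≠ 0 := by rwa [Ne, ZMod.val_eq_zero]
    omega

theorem crosses_iff_of_visible {p q : ZMod n × ZMod n} (hp : p.1.val + arcLen p ≤ n) :
    Crosses p q ↔ p.1.val < q.1.val ∧ q.1.val < p.1.val + arcLen p ∧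
      p.1.val + arcLen p < q.1.val + arcLen q := by
  have h1 := ZMod.val_lt p.1
  have h2 := ZMod.val_lt q.1
  have h4 := arcLen_pos p
  rcases le_or_gt p.1.val q.1.val with h | h
  · have ht : (q.1 - p.1).val = q.1.val - p.1.val := ZMod.val_sub h
    simp only [Crosses, ht]; omega
  · have ht : (q.1 - p.1).val = q.1.val + n - p.1.val := by
      apply val_sub_eq (by omega)
      rw [Nat.cast_sub (by omega)]; simp
    simp only [Crosses, ht]; omega

theorem expand_fst_val (p : ZMod n × ZMod n) : (expand p).1.val = p.1.val := by
  have h1 := ZMod.val_lt p.1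
  exact ZMod.val_cast_of_lt (by omega)

omit [NeZero n] in
theorem expand_snd_val {p : ZMod n × ZMod n} (hp : p.1.val + arcLen p ≤ n) :
    (expand p).2.val = p.1.val + arcLen p :=
  ZMod.val_cast_of_lt (by omega)

omit [NeZero n] in
theorem contract_fst_val {x y : ZMod (n + 1)} (h : x.val < y.val) :
    (contract x y).1.val = x.val := by
  have h1 := ZMod.val_lt y
  exact ZMod.val_cast_of_lt (by omega)

omit [NeZero n] in
theorem arcLen_contract {x y : ZMod (n + 1)} (h : x.val < y.val) :
    arcLen (contract x y) = y.val - x.val := by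
  have h1 := ZMod.val_lt y
  refine arcLen_eq (by omega) (by omega) ?_
  rw [Nat.cast_sub h.le]; simp

omit [NeZero n] in
theorem expand_contract {x y : ZMod (n + 1)} (h : x.val < y.val) :
    expand (contract x y) = (x, y) := by
  have h1 := ZMod.val_lt y
  rw [expand, contract_fst_val h, arcLen_contract h, Nat.add_sub_cancel' h.le]
  simp

theorem contract_expand {p : ZMod n × ZMod n} (hp : p.1.val + arcLen p ≤ n) :
    contract (expand p).1 (expand p).2 = p := by
  rw [contract, expand_fst_val, expand_snd_val hp]
  ext
  · simp
  · simp [fst_add_arcLen]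

open Classical in
/-- Contracting the side `{n, 0}` turns the diagonals of the `(n+1)`-gon into the arcs modulo `n`
that are neither edges nor the loop at `0` and do not cross that loop; the loop at `0` itself
corresponds to the contracted side. -/
theorem card_dissection_eq_loopDiss (hn : 2 ≤ n) (k : ℕ) :
    Nat.card {D : ZMod (n + 1) → ZMod (n + 1) → Prop // IsDissection D ∧ numDiag D = k} =
      (Finset.univ.filter fun T => IsLoopDiss (0 : ZMod n) T k).card := by
  rw [← Fintype.card_subtype, ← Nat.card_eq_fintype_card]
  have hvis : ∀ {T : Finset (ZMod n × ZMod n)}, NC (insert (0, 0) T) → ∀ p ∈ T,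
      p.1.val + arcLen p ≤ n := fun h p hp =>
    (visible_iff p).1 ((nc_insert_loop.1 h).2 p hp)
  set f : (ZMod (n + 1) → ZMod (n + 1) → Prop) → Finset (ZMod n × ZMod n) := fun D =>
    Finset.univ.filter fun p => p.1.val + arcLen p ≤ n ∧ D (expand p).1 (expand p).2 with hf
  set g : Finset (ZMod n × ZMod n) → ZMod (n + 1) → ZMod (n + 1) → Prop := fun T x y =>
    (x.val < y.val ∧ contract x y ∈ T) ∨ (y.val < x.val ∧ contract y x ∈ T) with hg
  have hgf : ∀ D, IsDissection D → g (f D) = D := by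
    rintro D ⟨hs, hd, -⟩
    have key : ∀ x y : ZMod (n + 1), x.val < y.val → (contract x y ∈ f D ↔ D x y) := by
      intro x y h
      have h1 := ZMod.val_lt y
      simp only [hf, Finset.mem_filter, Finset.mem_univ, true_and, expand_contract h,
        contract_fst_val h, arcLen_contract h]
      constructor
      · exact fun h => h.2
      · exact fun h => ⟨by omega, h⟩
    funext x y
    apply propext
    rcases lt_trichotomy x.val y.val with h | h | h
    · simp only [hg, h, key x y h, true_and, h.asymm, false_and, or_false]
    · simp only [hg, h, lt_irrefl, false_and, or_false, false_iff]
      exact fun hD => (hd x y hD).1 (ZMod.val_injective _ h)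
    · simp only [hg, h, key y x h, true_and, h.asymm, false_and, false_or]
      exact ⟨hs _ _, hs _ _⟩
  have hcard : ∀ D, IsDissection D → numDiag D = (f D).card := by
    intro D hD
    rw [numDiag_eq_card]
    symm
    refine Finset.card_bij (fun p _ => expand p) ?_ ?_ ?_
    · intro p hp
      have h4 := arcLen_pos p
      simp only [hf, Finset.mem_filter, Finset.mem_univ, true_and] at hp ⊢
      rw [expand_fst_val, expand_snd_val hp.1]
      exact ⟨by omega, hp.2⟩
    · intro p hp q hq h
      simp only [hf, Finset.mem_filter, Finset.mem_univ, true_and] at hp hq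
      rw [← contract_expand hp.1, h, contract_expand hq.1]
    · rintro ⟨x, y⟩ h
      simp only [Finset.mem_filter, Finset.mem_univ, true_and] at h
      have h1 := ZMod.val_lt y
      refine ⟨contract x y, ?_, expand_contract h.1⟩
      simp only [hf, Finset.mem_filter, Finset.mem_univ, true_and, expand_contract h.1,
        contract_fst_val h.1, arcLen_contract h.1]
      exact ⟨by omega, h.2⟩
  have hfg : ∀ T, IsLoopDiss 0 T k → f (g T) = T := by
    rintro T ⟨-, h2, -⟩
    ext p
    have h4 := arcLen_pos p
    simp only [hf, hg, Finset.mem_filter, Finset.mem_univ, true_and]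
    constructor
    · rintro ⟨hp, h⟩
      rw [contract_expand hp, expand_fst_val, expand_snd_val hp] at h
      rcases h with h | h
      · exact h.2
      · omega
    · intro h
      have hp := hvis h2 p h
      rw [contract_expand hp, expand_fst_val, expand_snd_val hp]
      exact ⟨hp, Or.inl ⟨by omega, h⟩⟩
  have hP : ∀ D, IsDissection D → Disjoint (f D) (insert (0, 0) (edges n)) ∧
      NC (insert (0, 0) (f D)) := by
    rintro D ⟨-, hd, hnc⟩
    rw [Finset.disjoint_insert_right, Finset.disjoint_left, nc_insert_loop]
    simp only [hf, Finset.mem_filter, Finset.mem_univ, true_and]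
    refine ⟨⟨?_, ?_⟩, ?_, fun p hp => (visible_iff p).2 hp.1⟩
    · rintro ⟨-, h⟩
      refine (hd _ _ h).2.2 ?_
      simp only [expand, arcLen_self, ZMod.val_zero]
      have := ZMod.natCast_self (n + 1)
      push_cast at this ⊢
      rw [zero_add, this]
    · rintro p ⟨-, h⟩ he
      rw [mem_edges_iff] at he
      refine (hd _ _ h).2.1 ?_
      simp only [expand, he]
      push_cast
      rfl
    · intro p hp q hq hc
      rw [Finset.mem_filter] at hp hq
      replace hp := hp.2
      replace hq := hq.2
      rw [crosses_iff_of_visible hp.1] at hc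
      refine hnc _ _ _ _ hp.2 hq.2 ?_
      unfold crossE
      rw [expand_fst_val, expand_snd_val hp.1, expand_fst_val, expand_snd_val hq.1]
      omega
  have hQ : ∀ T, IsLoopDiss 0 T k → IsDissection (g T) := by
    rintro T ⟨h1, h2, -⟩
    rw [Finset.disjoint_insert_right, Finset.disjoint_left] at h1
    have hdiag : ∀ x y : ZMod (n + 1), x.val < y.val → contract x y ∈ T →
        x ≠ y ∧ y ≠ x + 1 ∧ x ≠ y + 1 := by
      intro x y h hT
      have hy := ZMod.val_lt y
      have hv : (y - x).val = y.val - x.val := ZMod.val_sub h.le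
      refine ⟨fun h' => by simp [h'] at h, fun h' => h1.2 hT ?_, fun h' => h1.1 ?_⟩
      · rw [mem_edges_iff, arcLen_contract h, ← hv]
        exact val_sub_eq (by omega) (by rw [h', Nat.cast_one])
      · have h3 : (y - x).val = n := by
          apply val_sub_eq (by omega)
          have := ZMod.natCast_self (n + 1)
          push_cast at this
          rw [h', add_assoc, add_comm (1 : ZMod (n + 1)), this, add_zero]
        have hx0 : x.val = 0 := by omega
        have hyn : y.val = n := by omega
        simpa [contract, hx0, hyn] using hT
    have hcr : ∀ x y u v : ZMod (n + 1), x.val < y.val → contract x y ∈ T → u.val < v.val →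
        contract u v ∈ T → ¬ (x.val < u.val ∧ u.val < y.val ∧ y.val < v.val) := by
      intro x y u v h hT h' hT' hc
      have hp := hvis h2 _ hT
      refine (nc_insert_loop.1 h2).1 _ hT _ hT' ?_
      rw [crosses_iff_of_visible hp, contract_fst_val h, contract_fst_val h',
        arcLen_contract h, arcLen_contract h']
      omega
    refine ⟨fun i j h => Or.symm h, ?_, ?_⟩
    · rintro i j (h | h)
      · exact hdiag i j h.1 h.2
      · have := hdiag j i h.1 h.2
        exact ⟨this.1.symm, this.2.2, this.2.1⟩
    · rintro i j a b (h | h) (h' | h') hc <;>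
      · have h3 := hcr _ _ _ _ h.1 h.2 h'.1 h'.2
        have h4 := hcr _ _ _ _ h'.1 h'.2 h.1 h.2
        unfold crossE at hc
        omega
  refine card_transfer f g ?_ ?_ (fun D hD => hgf D hD.1) hfg
  · rintro D ⟨hD, hk⟩
    exact ⟨(hP D hD).1, (hP D hD).2, by rw [← hcard D hD, hk]⟩
  · intro T hT
    exact ⟨hQ T hT, by rw [hcard _ (hQ T hT), hfg T hT, hT.2.2]⟩
end All
end Transfer

/-! ### Rotation-invariant dissections and arcs modulo `m` -/

section Symmetric

theorem val_add_nat {n : ℕ} [NeZero n] (x : ZMod n) {a : ℕ} (ha : a < n) :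
    (x + (a : ZMod n)).val = if x.val + a < n then x.val + a else x.val + a - n := by
  have hx := ZMod.val_lt x
  rw [ZMod.val_add, ZMod.val_cast_of_lt ha]
  split_ifs with h
  · exact Nat.mod_eq_of_lt h
  · rw [Nat.mod_eq_sub_mod (by omega), Nat.mod_eq_of_lt (by omega)]

theorem eq_add_nat_of_val_lt {n : ℕ} [NeZero n] {x y : ZMod n} (h : x.val ≤ y.val) :
    y = x + ((y.val - x.val : ℕ) : ZMod n) := by
  rw [Nat.cast_sub h]; simp

/-- For a symmetric relation, being noncrossing can be tested relative to any base vertex. -/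
theorem noncrossing_iff {n : ℕ} [NeZero n] {D : ZMod n → ZMod n → Prop}
    (hs : ∀ i j, D i j → D j i) :
    (∀ i j a b, D i j → D a b → ¬ crossE i j a b) ↔
      ∀ (x : ZMod n) (a b c : ℕ), 0 < a → a < b → b < c → c < n →
        D x (x + (b : ZMod n)) → ¬ D (x + (a : ZMod n)) (x + (c : ZMod n)) := by
  constructor
  · intro h x a b c h0 hab hbc hc h1 h2
    refine h _ _ _ _ h1 h2 ?_
    have hx := ZMod.val_lt x
    unfold crossE
    rw [val_add_nat x (show a < n by omega), val_add_nat x (show b < n by omega),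
      val_add_nat x hc]
    split_ifs <;> omega
  · intro h
    have key : ∀ x u y v : ZMod n, x.val < u.val → u.val < y.val → y.val < v.val →
        D x y → ¬ D u v := by
      intro x u y v h1 h2 h3 hxy huv
      have hv := ZMod.val_lt v
      rw [eq_add_nat_of_val_lt (show x.val ≤ y.val by omega)] at hxy
      rw [eq_add_nat_of_val_lt (show x.val ≤ u.val by omega),
        eq_add_nat_of_val_lt (show x.val ≤ v.val by omega)] at huv
      exact h x _ _ _ (by omega) (by omega) (by omega) (by omega) hxy huv
    intro i j a b hij hab hc
    have sorted : ∀ i j : ZMod n, D i j →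
        ∃ i' j', D i' j' ∧ i'.val = min i.val j.val ∧ j'.val = max i.val j.val := by
      intro i j h
      rcases le_total i.val j.val with h1 | h1
      · exact ⟨i, j, h, (min_eq_left h1).symm, (max_eq_right h1).symm⟩
      · exact ⟨j, i, hs _ _ h, (min_eq_right h1).symm, (max_eq_left h1).symm⟩
    obtain ⟨x, y, hxy, h1, h2⟩ := sorted i j hij
    obtain ⟨u, v, huv, h3, h4⟩ := sorted a b hab
    rw [crossE, ← h1, ← h2, ← h3, ← h4] at hc
    rcases hc with hc | hc
    · exact key x u y v hc.1 hc.2.1 hc.2.2 hxy huv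
    · exact key u x v y hc.1 hc.2.1 hc.2.2 huv hxy

/-- The rotations preserving a relation. -/
def stab {n : ℕ} (D : ZMod n → ZMod n → Prop) : AddSubgroup (ZMod n) where
  carrier := {z | ∀ i j, D (i + z) (j + z) ↔ D i j}
  zero_mem' := by simp
  add_mem' := by
    intro a b ha hb i j
    rw [← add_assoc, ← add_assoc, hb, ha]
  neg_mem' := by
    intro a ha i j
    rw [← ha (i + -a) (j + -a)]
    simp

theorem mem_stab {n : ℕ} {D : ZMod n → ZMod n → Prop} {z : ZMod n} :
    z ∈ stab D ↔ ∀ i j, D (i + z) (j + z) ↔ D i j := Iff.rfl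

/-- The rotations by `d` and by `gcd n d` generate the same group. -/
theorem mem_stab_gcd {n : ℕ} (D : ZMod n → ZMod n → Prop) (d : ℕ) :
    (d : ZMod n) ∈ stab D ↔ ((n.gcd d : ℕ) : ZMod n) ∈ stab D := by
  constructor
  · intro h
    have h1 := Nat.gcd_eq_gcd_ab n d
    have h2 : ((n.gcd d : ℕ) : ZMod n) = n.gcdB d • (d : ZMod n) := by
      have := congrArg (Int.cast : ℤ → ZMod n) h1
      push_cast at this
      rw [this]; simp [mul_comm]
    rw [h2]
    exact zsmul_mem h _
  · intro h
    obtain ⟨q, hq⟩ := Nat.gcd_dvd_right n d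
    have h2 : (d : ZMod n) = q • ((n.gcd d : ℕ) : ZMod n) := by
      conv_lhs => rw [hq]
      simp [mul_comm]
    rw [h2]
    exact nsmul_mem h _

variable {n m r : ℕ} [NeZero n] [NeZero m]

omit [NeZero m] in
theorem mem_stab_of_map_eq_zero (π : ZMod n →+* ZMod m) {D : ZMod n → ZMod n → Prop}
    (hD : (m : ZMod n) ∈ stab D) {z : ZMod n} (hz : π z = 0) : z ∈ stab D := by
  have h1 : π ((z.val : ℕ) : ZMod n) = 0 := by simpa using hz
  rw [map_natCast, ZMod.natCast_eq_zero_iff] at h1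
  obtain ⟨q, hq⟩ := h1
  have h2 : z = q • (m : ZMod n) := by
    rw [← ZMod.natCast_zmod_val z, hq]; simp [mul_comm]
  rw [h2]
  exact nsmul_mem hD _

omit [NeZero m] in
/-- For a relation invariant under rotation by `m`, whether a chord belongs to it depends only on
its length and the class of its starting point modulo `m`. -/
theorem lift_iff (π : ZMod n →+* ZMod m) {D : ZMod n → ZMod n → Prop}
    (hD : (m : ZMod n) ∈ stab D) {x x' : ZMod n} (hx : π x = π x') (a : ℕ) :
    D x (x + (a : ZMod n)) ↔ D x' (x' + (a : ZMod n)) := by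
  have h := mem_stab_of_map_eq_zero π hD (z := x - x') (by rw [map_sub, hx, sub_self])
  rw [← h x' (x' + a)]
  ring_nf

omit [NeZero n] in
/-- In a noncrossing relation invariant under rotation by `m`, every chord cuts off at most
`m` consecutive sides, since a longer chord crosses its own rotation by `m`. -/
theorem chord_short {D : ZMod n → ZMod n → Prop} (hD : (m : ZMod n) ∈ stab D)
    (hnc : ∀ (x : ZMod n) (a b c : ℕ), 0 < a → a < b → b < c → c < n →
        D x (x + (b : ZMod n)) → ¬ D (x + (a : ZMod n)) (x + (c : ZMod n)))
    {x : ZMod n} {b : ℕ} (h : D x (x + (b : ZMod n))) : b ≤ m ∨ n ≤ b + m := by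
  by_contra! hc
  refine hnc x m b (b + m) (NeZero.pos m) hc.1 (by have := NeZero.pos m; omega) hc.2 h ?_
  have := (hD x (x + b)).2 h
  rwa [add_assoc, ← Nat.cast_add] at this

/-- The arcs modulo `m` of a relation on the vertices of the `n`-gon, edges discarded. It is meant
for relations invariant under rotation by `m`, where each arc may be tested on its lift starting in
`{0, …, m - 1}`. -/
noncomputable def foldArcs (m : ℕ) [NeZero m] (D : ZMod n → ZMod n → Prop) :
    Finset (ZMod m × ZMod m) :=
  open Classical in
  Finset.univ.filter fun p =>
    2 ≤ arcLen p ∧ D (p.1.val : ZMod n) ((p.1.val : ZMod n) + (arcLen p : ZMod n))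

/-- The vertex `x` and the vertex `L ≤ m` steps later span a lift of an arc of `T`. -/
def Lift (π : ZMod n →+* ZMod m) (T : Finset (ZMod m × ZMod m)) (x : ZMod n) (L : ℕ) : Prop :=
  0 < L ∧ L ≤ m ∧ (π x, π x + (L : ZMod m)) ∈ T

/-- The symmetric relation consisting of all lifts of the arcs of `T` to the `n`-gon. -/
def unfoldT (π : ZMod n →+* ZMod m) (T : Finset (ZMod m × ZMod m)) (x y : ZMod n) : Prop :=
  (∃ L, Lift π T x L ∧ y = x + (L : ZMod n)) ∨ ∃ L, Lift π T y L ∧ x = y + (L : ZMod n)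

omit [NeZero n] in
theorem mem_fold {D : ZMod n → ZMod n → Prop} {p : ZMod m × ZMod m} : p ∈ foldArcs m D ↔
    2 ≤ arcLen p ∧ D (p.1.val : ZMod n) ((p.1.val : ZMod n) + (arcLen p : ZMod n)) := by
  simp only [foldArcs, Finset.mem_filter, Finset.mem_univ, true_and]

theorem lift_fold_iff (π : ZMod n →+* ZMod m) {D : ZMod n → ZMod n → Prop}
    (hD : (m : ZMod n) ∈ stab D) {x : ZMod n} {L : ℕ} (h : 0 < L) (hL : L ≤ m) :
    Lift π (foldArcs m D) x L ↔ 2 ≤ L ∧ D x (x + (L : ZMod n)) := by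
  rw [Lift, mem_fold, arcLen_eq h hL rfl]
  dsimp only
  rw [lift_iff π hD (x' := x) (by simp)]
  tauto

variable (hn : n = r * m) (hr : 2 ≤ r) (h3 : 3 ≤ n)

omit [NeZero n] [NeZero m] in
include hn hr in
theorem two_mul_le : 2 * m ≤ n := by
  rw [hn]; exact Nat.mul_le_mul_right _ hr

include hn hr in
theorem nc_fold (π : ZMod n →+* ZMod m) {D : ZMod n → ZMod n → Prop}
    (hD : (m : ZMod n) ∈ stab D)
    (hnc : ∀ (x : ZMod n) (a b c : ℕ), 0 < a → a < b → b < c → c < n →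
        D x (x + (b : ZMod n)) → ¬ D (x + (a : ZMod n)) (x + (c : ZMod n))) :
    NC (foldArcs m D) := by
  have h2m := two_mul_le hn hr
  intro p hp q hq hc
  rw [mem_fold] at hp hq
  obtain ⟨h1, h2, h4⟩ := hc
  have h5 := arcLen_le p
  have h6 := arcLen_le q
  refine hnc (p.1.val : ZMod n) _ _ ((q.1 - p.1).val + arcLen q) h1 h2 h4 (by omega) hp.2 ?_
  have h7 := hq.2
  rw [lift_iff π hD (x' := (p.1.val : ZMod n) + ((q.1 - p.1).val : ZMod n)) (by simp)] at h7
  rwa [Nat.cast_add, ← add_assoc]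

/-- No chord is lost by folding, since by `chord_short` one of its two sides has at most `m`
steps. -/
theorem unfold_fold (π : ZMod n →+* ZMod m) {D : ZMod n → ZMod n → Prop}
    (hD : (m : ZMod n) ∈ stab D) (hs : ∀ i j, D i j → D j i)
    (hd : ∀ i j, D i j → i ≠ j ∧ j ≠ i + 1 ∧ i ≠ j + 1)
    (hnc : ∀ (x : ZMod n) (a b c : ℕ), 0 < a → a < b → b < c → c < n →
        D x (x + (b : ZMod n)) → ¬ D (x + (a : ZMod n)) (x + (c : ZMod n))) :
    unfoldT π (foldArcs m D) = D := by
  have key : ∀ x : ZMod n, ∀ L, 0 < L → L ≤ m → D x (x + (L : ZMod n)) →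
      Lift π (foldArcs m D) x L := by
    intro x L h hL hxy
    rw [lift_fold_iff π hD h hL]
    refine ⟨?_, hxy⟩
    by_contra h2
    obtain rfl : L = 1 := by omega
    exact (hd _ _ hxy).2.1 (by simp)
  funext x y
  apply propext
  constructor
  · rintro (⟨L, h, rfl⟩ | ⟨L, h, rfl⟩)
    · exact ((lift_fold_iff π hD h.1 h.2.1).1 h).2
    · exact hs _ _ ((lift_fold_iff π hD h.1 h.2.1).1 h).2
  · intro h
    have hxy : x + (((y - x).val : ℕ) : ZMod n) = y := by simp
    have h0 : 0 < (y - x).val := by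
      rw [Nat.pos_iff_ne_zero, Ne, ZMod.val_eq_zero, sub_eq_zero]
      exact (hd _ _ h).1.symm
    have hlt := ZMod.val_lt (y - x)
    have h' := h
    rw [← hxy] at h'
    rcases chord_short hD hnc h' with hL | hL
    · exact Or.inl ⟨_, key x _ h0 hL h', hxy.symm⟩
    · have hyx : x = y + ((n - (y - x).val : ℕ) : ZMod n) := by
        rw [Nat.cast_sub hlt.le]; simp
      have h2 : D y (y + ((n - (y - x).val : ℕ) : ZMod n)) := by
        rw [← hyx]; exact hs _ _ h
      exact Or.inr ⟨_, key y _ (by omega) (by omega) h2, hyx⟩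

omit [NeZero n] [NeZero m] in
/-- Two lifts, one of which starts strictly inside the other, are nested. -/
theorem lift_not_crossing (π : ZMod n →+* ZMod m) {T : Finset (ZMod m × ZMod m)} (hT : NC T)
    {x : ZMod n} {t L L' : ℕ} (h1 : Lift π T x L) (h2 : Lift π T (x + (t : ZMod n)) L')
    (h0 : 0 < t) (h4 : t < L) : t + L' ≤ L := by
  by_contra! hc
  obtain ⟨_, hL, hp⟩ := h1
  obtain ⟨h5, hL', hq⟩ := h2
  refine hT _ hp _ hq ?_
  have ht : (π (x + (t : ZMod n)) - π x).val = t := val_sub_eq (by omega) (by simp)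
  rw [Crosses, arcLen_eq (show 0 < L by omega) hL rfl, arcLen_eq h5 hL' rfl]
  simp only [ht]
  omega

omit [NeZero n] in
theorem natCast_eq_of_lt {a b : ℕ} (ha : a < n) (hb : b < n) (h : (a : ZMod n) = b) : a = b := by
  rw [← ZMod.val_cast_of_lt ha, h, ZMod.val_cast_of_lt hb]

theorem exists_nat_add (x y : ZMod n) : ∃ a < n, y = x + (a : ZMod n) :=
  ⟨(y - x).val, ZMod.val_lt _, by simp⟩

omit [NeZero n] in
include hn hr h3 in
theorem m_add_two_le : m + 2 ≤ n := by
  have := two_mul_le hn hr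
  have := NeZero.pos m
  by_contra hc
  omega

omit [NeZero n] in
include hn hr in
/-- The number of steps from `x` to `y` determines how an arc of `T` can be lifted to the chord
`{x, y}`. -/
theorem unfold_iff (π : ZMod n →+* ZMod m) {T : Finset (ZMod m × ZMod m)} {x : ZMod n}
    {a : ℕ} (ha : a < n) : unfoldT π T x (x + (a : ZMod n)) ↔
      Lift π T x a ∨ Lift π T (x + (a : ZMod n)) (n - a) := by
  have h2m := two_mul_le hn hr
  have hm := NeZero.pos m
  constructor
  · rintro (⟨L, h, hy⟩ | ⟨L, h, hy⟩)
    · left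
      have h1 := h.2.1
      rw [natCast_eq_of_lt ha (show L < n by omega) (add_left_cancel hy)]
      exact h
    · right
      have h1 := h.2.1
      have h5 := h.1
      have h4 : ((n - L : ℕ) : ZMod n) = a := by
        rw [Nat.cast_sub (by omega), ZMod.natCast_self]
        rw [add_assoc] at hy
        linear_combination (-1 : ZMod n) * left_eq_add.1 hy
      have := natCast_eq_of_lt (by omega) ha h4
      rwa [show n - a = L by omega]
  · rintro (h | h)
    · exact Or.inl ⟨a, h, rfl⟩
    · refine Or.inr ⟨n - a, h, ?_⟩
      rw [Nat.cast_sub ha.le]; simp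

omit [NeZero n] in
include hn hr in
theorem noncrossing_unfold (π : ZMod n →+* ZMod m) {T : Finset (ZMod m × ZMod m)} (hT : NC T)
    (x : ZMod n) (a b c : ℕ) (h0 : 0 < a) (hab : a < b) (hbc : b < c) (hc : c < n)
    (h1 : unfoldT π T x (x + (b : ZMod n))) :
    ¬ unfoldT π T (x + (a : ZMod n)) (x + (c : ZMod n)) := by
  intro h2
  have hca : x + (c : ZMod n) = x + (a : ZMod n) + ((c - a : ℕ) : ZMod n) := by
    rw [Nat.cast_sub (by omega)]; ring
  rw [unfold_iff hn hr π (by omega)] at h1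
  rw [hca, unfold_iff hn hr π (by omega), ← hca] at h2
  rcases h1 with h1 | h1 <;> rcases h2 with h2 | h2
  · have := lift_not_crossing π hT h1 h2 h0 hab
    omega
  · have e : x = x + (c : ZMod n) + ((n - c : ℕ) : ZMod n) := by
      rw [Nat.cast_sub hc.le]; simp
    rw [e] at h1
    have h4 := h1.2.1
    rw [← e] at h1
    have := lift_not_crossing π hT (t := n - c) (L' := b) h2 (by rwa [← e]) (by omega) (by omega)
    omega
  · have e : x + (b : ZMod n) = x + (a : ZMod n) + ((b - a : ℕ) : ZMod n) := by
      rw [Nat.cast_sub hab.le]; ring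
    rw [e] at h1
    have := lift_not_crossing π hT h2 h1 (by omega) (by omega)
    omega
  · have e : x + (c : ZMod n) = x + (b : ZMod n) + ((c - b : ℕ) : ZMod n) := by
      rw [Nat.cast_sub hbc.le]; ring
    rw [e] at h2
    have := lift_not_crossing π hT h1 h2 (by omega) (by omega)
    omega

omit [NeZero n] in
include hn hr in
/-- For `r = 2`, a chord of `m` steps can also be read from its other end; it then comes from the
same loop, so folding recovers `T` in this case too. -/
theorem fold_unfold (π : ZMod n →+* ZMod m) {T : Finset (ZMod m × ZMod m)}
    (hT : Disjoint T (edges m)) : foldArcs m (unfoldT π T) = T := by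
  have h2m := two_mul_le hn hr
  ext p
  have h4 := arcLen_le p
  have h5 := arcLen_pos p
  rw [mem_fold, unfold_iff hn hr π (by omega)]
  have hp : Lift π T (p.1.val : ZMod n) (arcLen p) ↔ p ∈ T := by
    simp [Lift, h4, h5, fst_add_arcLen]
  rw [hp]
  constructor
  · rintro ⟨-, h | h⟩
    · exact h
    · have h6 := h.2.1
      obtain ⟨-, -, h7⟩ := h
      have h8 : n - arcLen p = m := by omega
      have h9 : arcLen p = m := by omega
      have h10 := fst_add_arcLen p
      rw [h9] at h10
      have h11 : π ((p.1.val : ZMod n) + (arcLen p : ZMod n)) = p.1 := by simp [h9]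
      rw [h11, h8, h10] at h7
      exact h7
  · intro h
    refine ⟨?_, Or.inl h⟩
    have := Finset.disjoint_left.1 hT h
    rw [mem_edges_iff] at this
    omega

include hn hr h3 in
theorem isDissection_unfold (π : ZMod n →+* ZMod m) {T : Finset (ZMod m × ZMod m)}
    (hT : Disjoint T (edges m)) (hnc : NC T) : IsDissection (unfoldT π T) ∧
      (m : ZMod n) ∈ stab (unfoldT π T) := by
  have hs : ∀ i j, unfoldT π T i j → unfoldT π T j i := fun i j h => Or.symm h
  have hm2 := m_add_two_le hn hr h3
  refine ⟨⟨hs, ?_, (noncrossing_iff hs).2 (noncrossing_unfold hn hr π hnc)⟩, ?_⟩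
  · have key : ∀ (x : ZMod n) (L : ℕ), Lift π T x L →
        x ≠ x + (L : ZMod n) ∧ x + (L : ZMod n) ≠ x + 1 ∧ x ≠ x + (L : ZMod n) + 1 := by
      rintro x L ⟨h1, h2, h⟩
      have h4 : L ≠ 1 := by
        rintro rfl
        refine Finset.disjoint_left.1 hT h ?_
        rw [mem_edges]; simp
      refine ⟨fun he => ?_, fun he => ?_, fun he => ?_⟩
      · have := natCast_eq_of_lt (n := n) (a := 0) (b := L) (by omega) (by omega)
          (by rw [Nat.cast_zero]; exact (left_eq_add.1 he).symm)
        omega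
      · exact h4 (natCast_eq_of_lt (n := n) (by omega) (by omega)
          (by rw [Nat.cast_one]; exact add_left_cancel he))
      · have := natCast_eq_of_lt (n := n) (a := 0) (b := L + 1) (by omega) (by omega)
          (by rw [add_assoc] at he; push_cast; exact (left_eq_add.1 he).symm)
        omega
    rintro i j (⟨L, h, rfl⟩ | ⟨L, h, rfl⟩)
    · exact key i L h
    · have := key j L h
      exact ⟨this.1.symm, this.2.2, this.2.1⟩
  · intro i j
    have h1 : ∀ (x : ZMod n) L, Lift π T (x + (m : ZMod n)) L ↔ Lift π T x L := by
      intro x L; simp [Lift]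
    have h2 : ∀ (x y : ZMod n) (L : ℕ), y + (m : ZMod n) = x + (m : ZMod n) + (L : ZMod n) ↔
        y = x + (L : ZMod n) := by
      intro x y L
      rw [add_right_comm, add_left_inj]
    simp only [unfoldT, h1, h2]

/-! ### Counting the diagonals of an unfolded set of arcs -/


open Classical in
omit [NeZero m] in
/-- Every diagonal is counted once in each orientation. -/
theorem two_mul_numDiag {D : ZMod n → ZMod n → Prop} (hs : ∀ i j, D i j → D j i)
    (hd : ∀ i, ¬ D i i) : 2 * numDiag D =
      (Finset.univ.filter fun p : ZMod n × ZMod n => D p.1 p.2).card := by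
  rw [two_mul, numDiag_eq_card]
  have h1 : (Finset.univ.filter fun p : ZMod n × ZMod n => p.1.val < p.2.val ∧ D p.1 p.2).card =
      (Finset.univ.filter fun p : ZMod n × ZMod n => p.2.val < p.1.val ∧ D p.1 p.2).card := by
    refine Finset.card_bij (fun p _ => p.swap) ?_ ?_ ?_
    · intro p hp
      simp only [Finset.mem_filter, Finset.mem_univ, true_and, Prod.fst_swap,
        Prod.snd_swap] at hp ⊢
      exact ⟨hp.1, hs _ _ hp.2⟩
    · intro p _ q _ h
      exact Prod.swap_injective h
    · intro p hp
      refine ⟨p.swap, ?_, p.swap_swap⟩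
      simp only [Finset.mem_filter, Finset.mem_univ, true_and, Prod.fst_swap,
        Prod.snd_swap] at hp ⊢
      exact ⟨hp.1, hs _ _ hp.2⟩
  nth_rewrite 2 [h1]
  rw [← Finset.card_union_of_disjoint]
  · congr 1
    ext p
    simp only [Finset.mem_union, Finset.mem_filter, Finset.mem_univ, true_and, ← or_and_right]
    refine ⟨fun h => h.2, fun h => ⟨?_, h⟩⟩
    rw [← Nat.ne_iff_lt_or_gt]
    intro he
    have he' := ZMod.val_injective n he
    rw [he'] at h
    exact hd _ h
  · rw [Finset.disjoint_left]
    intro p hp hq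
    rw [Finset.mem_filter] at hp hq
    omega

open Classical in
/-- The ordered pairs of vertices spanning a lift of an arc of `T`. -/
noncomputable def lifts (π : ZMod n →+* ZMod m) (T : Finset (ZMod m × ZMod m)) :
    Finset (ZMod n × ZMod n) :=
  Finset.univ.filter fun p => ∃ L, Lift π T p.1 L ∧ p.2 = p.1 + (L : ZMod n)

omit [NeZero m] in
theorem mem_lifts {π : ZMod n →+* ZMod m} {T : Finset (ZMod m × ZMod m)} {p : ZMod n × ZMod n} :
    p ∈ lifts π T ↔ ∃ L, Lift π T p.1 L ∧ p.2 = p.1 + (L : ZMod n) := by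
  simp [lifts]

include hn hr in
/-- Every arc modulo `m` has `r` lifts. -/
theorem card_lifts (π : ZMod n →+* ZMod m) (T : Finset (ZMod m × ZMod m)) :
    (lifts π T).card = r * T.card := by
  have h2m := two_mul_le hn hr
  have hm := NeZero.pos m
  rw [mul_comm]
  trans (T ×ˢ Finset.range r).card
  swap
  · rw [Finset.card_product, Finset.card_range]
  symm
  have hlt : ∀ (v : ZMod m) (s : ℕ), s < r → v.val + m * s < n := by
    intro v s hs
    have h1 := ZMod.val_lt v
    have h4 : m * (s + 1) ≤ r * m := by rw [mul_comm r]; exact Nat.mul_le_mul_left _ hs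
    rw [hn]; linarith
  have hπ : ∀ (v : ZMod m) (s : ℕ), π ((v.val + m * s : ℕ) : ZMod n) = v := by
    intro v s
    rw [map_natCast]; simp
  refine Finset.card_bij (fun x _ => (((x.1.1.val + m * x.2 : ℕ) : ZMod n),
    ((x.1.1.val + m * x.2 : ℕ) : ZMod n) + (arcLen x.1 : ZMod n))) ?_ ?_ ?_
  · rintro ⟨p, s⟩ h
    rw [Finset.mem_product] at h
    rw [mem_lifts]
    refine ⟨arcLen p, ⟨arcLen_pos p, arcLen_le p, ?_⟩, rfl⟩
    rw [hπ, fst_add_arcLen]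
    exact h.1
  · rintro ⟨p, s⟩ h ⟨q, s'⟩ h' he
    simp only [Finset.mem_product, Finset.mem_range] at h h'
    simp only [Prod.mk.injEq] at he
    have h1 := natCast_eq_of_lt (hlt _ _ h.2) (hlt _ _ h'.2) he.1
    rw [he.1] at he
    have h4 := arcLen_le p
    have h5 := arcLen_le q
    have h6 := natCast_eq_of_lt (by omega) (by omega) (add_left_cancel he.2)
    have h7 : p.1 = q.1 := by
      rw [← hπ p.1 s, ← hπ q.1 s', h1]
    have h8 : p.2 = q.2 := by
      rw [← fst_add_arcLen p, ← fst_add_arcLen q, h6, h7]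
    rw [h7] at h1
    have h9 : s = s' := Nat.eq_of_mul_eq_mul_left hm (by omega)
    rw [h9, Prod.ext h7 h8]
  · rintro ⟨x, y⟩ h
    rw [mem_lifts] at h
    obtain ⟨L, ⟨h1, h4, h5⟩, h6⟩ := h
    have hx : (π x).val = x.val % m := by
      conv_lhs => rw [← ZMod.natCast_zmod_val x, map_natCast]
      exact ZMod.val_natCast _ _
    refine ⟨((π x, π x + (L : ZMod m)), x.val / m), ?_, ?_⟩
    · rw [Finset.mem_product, Finset.mem_range]
      refine ⟨h5, Nat.div_lt_of_lt_mul ?_⟩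
      rw [mul_comm m, ← hn]
      exact ZMod.val_lt x
    · dsimp only at h6 ⊢
      rw [hx, Nat.mod_add_div, ZMod.natCast_zmod_val, arcLen_eq h1 h4 rfl, ← h6]

/-- The number of loops in `T`. -/
def numLoops (T : Finset (ZMod m × ZMod m)) : ℕ := (T.filter fun p => p.1 = p.2).card

include hn hr h3 in
/-- Each arc has `r` lifts, and distinct lifts are distinct diagonals, except that for `r = 2`
the two lifts of a loop are the two orientations of one diameter. -/
theorem numDiag_unfold (π : ZMod n →+* ZMod m) {T : Finset (ZMod m × ZMod m)}
    (hT : Disjoint T (edges m)) (hnc : NC T) :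
    numDiag (unfoldT π T) + (if r = 2 then numLoops T else 0) = r * T.card := by
  classical
  have h2m := two_mul_le hn hr
  obtain ⟨⟨hs, hd, -⟩, -⟩ := isDissection_unfold hn hr h3 π hT hnc
  have h1 := two_mul_numDiag hs fun i h => (hd i i h).1 rfl
  have h4 : (Finset.univ.filter fun p : ZMod n × ZMod n => unfoldT π T p.1 p.2) =
      lifts π T ∪ (lifts π T).image Prod.swap := by
    ext ⟨x, y⟩
    rw [Finset.mem_filter]
    simp only [Finset.mem_univ, true_and, Finset.mem_union, Finset.mem_image,
      mem_lifts, Prod.exists, Prod.swap_prod_mk, Prod.mk.injEq, unfoldT]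
    refine or_congr Iff.rfl ⟨fun h => ⟨y, x, h, rfl, rfl⟩, ?_⟩
    rintro ⟨a, b, h, rfl, rfl⟩
    exact h
  have h5 := Finset.card_union_add_card_inter (lifts π T) ((lifts π T).image Prod.swap)
  rw [← h4, ← h1, Finset.card_image_of_injective _ Prod.swap_injective, card_lifts hn hr] at h5
  have h6 : lifts π T ∩ (lifts π T).image Prod.swap =
      if r = 2 then lifts π (T.filter fun p => p.1 = p.2) else ∅ := by
    have key : ∀ x : ZMod n, ∀ L L', Lift π T x L → Lift π T (x + (L : ZMod n)) L' →
        x = x + (L : ZMod n) + (L' : ZMod n) → r = 2 ∧ L = m := by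
      rintro x L L' ⟨h6, h7, -⟩ ⟨h8, h9, -⟩ h10
      have h11 : L + L' = n := by
        by_contra hne
        have := natCast_eq_of_lt (n := n) (a := 0) (b := L + L') (by omega) (by omega)
          (by rw [add_assoc] at h10; push_cast; exact (left_eq_add.1 h10).symm)
        omega
      refine ⟨?_, by omega⟩
      by_contra hne
      have : 3 * m ≤ r * m := Nat.mul_le_mul_right _ (by omega)
      have := NeZero.pos m
      omega
    ext ⟨x, y⟩
    simp only [Finset.mem_inter, Finset.mem_image, Prod.exists, Prod.swap_prod_mk, Prod.mk.injEq]
    constructor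
    · rintro ⟨hx, a, b, hy, rfl, rfl⟩
      rw [mem_lifts] at hx hy
      obtain ⟨L, hL, hx⟩ := hx
      obtain ⟨L', hL', hy⟩ := hy
      dsimp only at hL hL' hx hy
      subst hx
      obtain ⟨rfl, rfl⟩ := key _ _ _ hL hL' hy
      rw [if_pos rfl, mem_lifts]
      refine ⟨L, ⟨hL.1, le_rfl, ?_⟩, rfl⟩
      rw [Finset.mem_filter]
      exact ⟨hL.2.2, by simp⟩
    · intro h
      split_ifs at h with hr2
      · rw [mem_lifts] at h
        obtain ⟨L, ⟨h7, h8, h9⟩, h10⟩ := h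
        rw [Finset.mem_filter] at h9
        dsimp only at h9 h10
        have h11 : L = m := by
          rw [left_eq_add, ZMod.natCast_eq_zero_iff] at h9
          exact le_antisymm h8 (Nat.le_of_dvd h7 h9.2)
        subst h11
        have h12 : π y = π x := by rw [h10]; simp
        refine ⟨mem_lifts.2 ⟨L, ⟨h7, h8, h9.1⟩, h10⟩, y, x, mem_lifts.2 ⟨L, ⟨h7, h8, ?_⟩, ?_⟩,
          rfl, rfl⟩
        · dsimp only; rw [h12]; exact h9.1
        · dsimp only
          rw [h10, add_assoc, ← Nat.cast_add, show L + L = n by rw [hn, hr2]; ring]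
          simp
      · simp at h
  rw [h6] at h5
  split_ifs at h5 ⊢ with hr2
  · rw [card_lifts hn hr] at h5
    rw [numLoops]
    subst hr2
    omega
  · simp at h5
    omega

include hn hr h3 in
/-- Folding and unfolding are inverse bijections between the dissections of the `n`-gon invariant
under rotation by `m = n / r` and the noncrossing sets of arcs modulo `m` without edges. -/
theorem card_symmetric (π : ZMod n →+* ZMod m) (k : ℕ) :
    Nat.card {D : ZMod n → ZMod n → Prop //
      (IsDissection D ∧ numDiag D = k) ∧ (m : ZMod n) ∈ stab D} =
    Nat.card {T : Finset (ZMod m × ZMod m) // (Disjoint T (edges m) ∧ NC T) ∧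
      k + (if r = 2 then numLoops T else 0) = r * T.card} := by
  have hP : ∀ D : ZMod n → ZMod n → Prop, IsDissection D → (m : ZMod n) ∈ stab D →
      (Disjoint (foldArcs m D) (edges m) ∧ NC (foldArcs m D)) ∧
        unfoldT π (foldArcs m D) = D := by
    rintro D ⟨hs, hd, hnc⟩ hD
    rw [noncrossing_iff hs] at hnc
    refine ⟨⟨?_, nc_fold hn hr π hD hnc⟩, unfold_fold π hD hs hd hnc⟩
    rw [Finset.disjoint_left]
    intro p hp
    rw [mem_fold] at hp
    rw [mem_edges_iff]
    omega
  refine card_transfer (foldArcs m) (unfoldT π) ?_ ?_ ?_ ?_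
  · rintro D ⟨⟨hD, rfl⟩, hm⟩
    obtain ⟨h1, h2⟩ := hP D hD hm
    refine ⟨h1, ?_⟩
    have := numDiag_unfold hn hr h3 π h1.1 h1.2
    rwa [h2] at this
  · rintro T ⟨h1, h2⟩
    obtain ⟨h4, h5⟩ := isDissection_unfold hn hr h3 π h1.1 h1.2
    have := numDiag_unfold hn hr h3 π h1.1 h1.2
    exact ⟨⟨h4, by omega⟩, h5⟩
  · rintro D ⟨⟨hD, -⟩, hm⟩
    exact (hP D hD hm).2
  · rintro T ⟨h1, -⟩
    exact fold_unfold hn hr π h1.1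

end Symmetric

/-! ### Numbers of invariant dissections and the sieving phenomenon -/

section Assembly
variable {m : ℕ} [NeZero m]

open Classical in
/-- Two loops at different vertices cross, so a noncrossing set of arcs has at most one loop. -/
theorem numLoops_eq {T : Finset (ZMod m × ZMod m)} (hT : NC T) :
    numLoops T = if ∃ v, (v, v) ∈ T then 1 else 0 := by
  split_ifs with h
  · obtain ⟨v, hv⟩ := h
    rw [numLoops, Finset.card_eq_one]
    refine ⟨(v, v), ?_⟩
    ext ⟨i, j⟩
    rw [Finset.mem_filter, Finset.mem_singleton]
    constructor
    · rintro ⟨h1, h2⟩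
      dsimp only at h2
      subst h2
      by_contra hne
      exact hT _ h1 _ hv (crosses_loops fun h => hne (by rw [h]))
    · intro h
      rw [h]; exact ⟨hv, rfl⟩
  · rw [numLoops, Finset.card_eq_zero, Finset.filter_eq_empty_iff]
    rintro ⟨i, j⟩ h1 h2
    dsimp only at h2
    subst h2
    exact h ⟨i, h1⟩

open Classical in
theorem natCard_finset (P : Finset (ZMod m × ZMod m) → Prop) :
    Nat.card {T // P T} = (Finset.univ.filter P).card := by
  rw [Nat.card_eq_fintype_card, Fintype.card_subtype]

/-- The centrally symmetric dissections with an even number `2 a` of diagonals have no diameter;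
they correspond to sets of `a` arcs without a loop. -/
theorem card_even (hm : 2 ≤ m) (a : ℕ) :
    Nat.card {T : Finset (ZMod m × ZMod m) // (Disjoint T (edges m) ∧ NC T) ∧
      2 * a + numLoops T = 2 * T.card} = (m + a - 1).choose a * (m - 2).choose a := by
  classical
  have h1 : ∀ T : Finset (ZMod m × ZMod m), (Disjoint T (edges m) ∧ NC T) ∧
      2 * a + numLoops T = 2 * T.card ↔ IsDiss T a ∧ ¬ ∃ v, (v, v) ∈ T := by
    intro T
    unfold IsDiss
    constructor
    · rintro ⟨⟨h1, h2⟩, h3⟩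
      rw [numLoops_eq h2] at h3
      split_ifs at h3 with h
      · omega
      · exact ⟨⟨h1, h2, by omega⟩, h⟩
    · rintro ⟨⟨h1, h2, h3⟩, h⟩
      rw [numLoops_eq h2, if_neg h, h3]
      exact ⟨⟨h1, h2⟩, rfl⟩
  rw [Nat.card_congr (Equiv.subtypeEquivRight h1), natCard_finset]
  have h2 := Finset.card_filter_add_card_filter_not (s := Finset.univ.filter
    fun T : Finset (ZMod m × ZMod m) => IsDiss T a) (fun T => ∃ v, (v, v) ∈ T)
  rw [Finset.filter_filter, Finset.filter_filter, card_isDiss (by omega)] at h2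
  rcases a with - | b
  · have h3 : (Finset.univ.filter fun T : Finset (ZMod m × ZMod m) =>
        IsDiss T 0 ∧ ∃ v, (v, v) ∈ T) = ∅ := by
      rw [Finset.filter_eq_empty_iff]
      rintro T - ⟨⟨-, -, h⟩, v, hv⟩
      rw [Finset.card_eq_zero] at h
      simp [h] at hv
    rw [h3] at h2
    simpa using h2
  · rw [card_isDiss_loop hm] at h2
    obtain ⟨M, rfl⟩ : ∃ M, m = M + 2 := ⟨m - 2, by omega⟩
    rw [show M + 2 - 1 = M + 1 by omega, show M + 2 - 2 = M by omega,
      Nat.choose_succ_succ M b, mul_add, show M + 2 + (b + 1) - 1 = M + 2 + b by omega] at h2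
    rw [show M + 2 + (b + 1) - 1 = M + 2 + b by omega, show M + 2 - 2 = M by omega]
    have h3 := Nat.add_left_cancel (h2.trans rfl)
    rw [Nat.succ_eq_add_one] at h3
    rw [← h3]
    congr 1
    ext T
    simp only [Finset.mem_filter]

/-- The centrally symmetric dissections with an odd number `2 a + 1` of diagonals have one diameter;
they correspond to sets of `a + 1` arcs with a loop. -/
theorem card_odd (hm : 2 ≤ m) (a : ℕ) :
    Nat.card {T : Finset (ZMod m × ZMod m) // (Disjoint T (edges m) ∧ NC T) ∧
      2 * a + 1 + numLoops T = 2 * T.card} = (m + a).choose (a + 1) * (m - 2).choose a := by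
  classical
  have h1 : ∀ T : Finset (ZMod m × ZMod m), (Disjoint T (edges m) ∧ NC T) ∧
      2 * a + 1 + numLoops T = 2 * T.card ↔ IsDiss T (a + 1) ∧ ∃ v, (v, v) ∈ T := by
    intro T
    unfold IsDiss
    constructor
    · rintro ⟨⟨h1, h2⟩, h3⟩
      rw [numLoops_eq h2] at h3
      split_ifs at h3 with h
      · exact ⟨⟨h1, h2, by omega⟩, h⟩
      · omega
    · rintro ⟨⟨h1, h2, h3⟩, h⟩
      rw [numLoops_eq h2, if_pos h, h3]
      exact ⟨⟨h1, h2⟩, rfl⟩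
  rw [Nat.card_congr (Equiv.subtypeEquivRight h1), natCard_finset,
    ← card_isDiss_loop hm]
  congr 1
  ext T
  simp only [Finset.mem_filter]

/-- For `r ≥ 3` the dissections correspond to arbitrary noncrossing sets of `a` arcs. -/
theorem card_dvd (hm : 1 ≤ m) {r : ℕ} (hr : 0 < r) (a : ℕ) :
    Nat.card {T : Finset (ZMod m × ZMod m) // (Disjoint T (edges m) ∧ NC T) ∧
      r * a = r * T.card} = (m + a - 1).choose a * (m - 1).choose a := by
  classical
  have h1 : ∀ T : Finset (ZMod m × ZMod m), (Disjoint T (edges m) ∧ NC T) ∧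
      r * a = r * T.card ↔ IsDiss T a := by
    intro T
    rw [IsDiss, and_assoc, Nat.mul_right_inj hr.ne', eq_comm (a := a)]
  rw [Nat.card_congr (Equiv.subtypeEquivRight h1), natCard_finset, card_isDiss hm]

/-- The Kirkman–Cayley formula for the number of dissections of the `n`-gon with `k` diagonals. -/
theorem card_dissection {n : ℕ} (hn : 3 ≤ n) (k : ℕ) :
    Nat.card {D : ZMod n → ZMod n → Prop // IsDissection D ∧ numDiag D = k} * (k + 1) =
      (n + k - 1).choose k * (n - 3).choose k := by
  obtain ⟨N, rfl⟩ : ∃ N, n = N + 1 := ⟨n - 1, by omega⟩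
  have : NeZero N := ⟨by omega⟩
  classical
  have h1 := card_isLoopDiss (m := N) (by omega) k
  rw [← card_dissection_eq_loopDiss (by omega) k] at h1
  have h2 := Nat.choose_succ_right_eq (N + k) k
  rw [Nat.add_sub_cancel] at h2
  rw [show N + 1 + k - 1 = N + k by omega, show N + 1 - 3 = N - 2 by omega]
  refine Nat.eq_of_mul_eq_mul_left (show 0 < N by omega) ?_
  rw [← mul_assoc, h1]
  linear_combination (N - 2).choose k * h2

end Assembly

/-- Reiner–Stanton–White.  Fix `k ≥ 0` and `n ≥ 3`.  The set of
noncrossing dissections of the regular `n`-gon with exactly `k` diagonals (encoded as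
symmetric relations `D` on the vertex set `ZMod n` whose members are pairwise
noncrossing diagonals), with the cyclic group `Z_n` acting by rotation, together with
`X(q) = (1/[n+k]_q)·[n+k choose k+1]_q·[n−3 choose k]_q`, exhibits the cyclic sieving
phenomenon: for all `d ≥ 0`, the number of dissections fixed by the `d`-th power of
rotation equals `X(ζ^d)` with `ζ = e^{2πi/n}`. -/
theorem statement0 (n k : ℕ) (hn : 3 ≤ n) :
    ∃ P : Polynomial ℂ,
      P * qnat (n + k) = qbinom (n + k) (k + 1) * qbinom (n - 3) k ∧
      ∀ d : ℕ,
        (Nat.card {D : ZMod n → ZMod n → Prop //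
            (∀ i j, D i j → D j i) ∧
            (∀ i j, D i j → i ≠ j ∧ j ≠ i + 1 ∧ i ≠ j + 1) ∧
            (∀ i j a b, D i j → D a b → ¬ crossE i j a b) ∧
            Nat.card {p : ZMod n × ZMod n // p.1.val < p.2.val ∧ D p.1 p.2} = k ∧
            (∀ i j, D (i + (d : ZMod n)) (j + (d : ZMod n)) ↔ D i j)} : ℂ) =
          P.eval (Complex.exp (2 * Real.pi * Complex.I / n) ^ d) := by
  refine ⟨sievePoly n k, sievePoly_spec n k hn, fun d => ?_⟩
  have h1 : ∀ D : ZMod n → ZMod n → Prop, ((∀ i j, D i j → D j i) ∧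
      (∀ i j, D i j → i ≠ j ∧ j ≠ i + 1 ∧ i ≠ j + 1) ∧
      (∀ i j a b, D i j → D a b → ¬ crossE i j a b) ∧
      Nat.card {p : ZMod n × ZMod n // p.1.val < p.2.val ∧ D p.1 p.2} = k ∧
      (∀ i j, D (i + (d : ZMod n)) (j + (d : ZMod n)) ↔ D i j)) ↔
      (IsDissection D ∧ numDiag D = k) ∧ ((n.gcd d : ℕ) : ZMod n) ∈ stab D := by
    intro D
    rw [← mem_stab_gcd, mem_stab, IsDissection, numDiag]
    tauto
  rw [Nat.card_congr (Equiv.subtypeEquivRight h1)]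
  set w := Complex.exp (2 * Real.pi * Complex.I / n) ^ d with hw
  obtain ⟨r, hr⟩ := Nat.gcd_dvd_left n d
  set m := n.gcd d with hm
  rw [mul_comm] at hr
  have hm0 : 0 < m := Nat.pos_of_ne_zero fun h => by rw [h] at hr; omega
  have hwr : IsPrimitiveRoot w r := by
    have h2 := Complex.isPrimitiveRoot_exp n (by omega)
    have h3 : orderOf w = r := by
      rw [hw, IsOfFinOrder.orderOf_pow _ _ (isOfFinOrder_iff_pow_eq_one.2 ⟨n, by omega, h2.pow_eq_one⟩), ← h2.eq_orderOf, ← hm]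
      exact Nat.div_eq_of_eq_mul_left hm0 hr
    rw [← h3]
    exact IsPrimitiveRoot.orderOf w
  have : NeZero m := ⟨hm0.ne'⟩
  have : NeZero n := ⟨by omega⟩
  have hr0 : r ≠ 0 := by rintro rfl; omega
  rcases Nat.lt_or_ge r 2 with hr2 | hr2
  · obtain rfl : r = 1 := by omega
    have hmn : m = n := by omega
    have h2 : ∀ D : ZMod n → ZMod n → Prop, (IsDissection D ∧ numDiag D = k) ∧
        (m : ZMod n) ∈ stab D ↔ IsDissection D ∧ numDiag D = k := by
      intro D
      rw [hmn, ZMod.natCast_self]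
      exact and_iff_left (zero_mem _)
    rw [Nat.card_congr (Equiv.subtypeEquivRight h2), IsPrimitiveRoot.one_right_iff.1 hwr]
    have h3 := sievePoly_eval_one n k hn
    rw [← card_dissection hn k] at h3
    push_cast at h3
    exact (mul_right_cancel₀ (by exact_mod_cast k.succ_ne_zero) h3).symm
  -- from here on only `n = r * m` and the primitivity of `w` matter
  rw [card_symmetric hr hr2 hn (ZMod.castHom ⟨r, by rw [hr, mul_comm]⟩ (ZMod m)) k, hr]
  clear_value m w
  rcases hr2.eq_or_lt with rfl | hr3
  · simp only [if_true]
    rcases Nat.even_or_odd' k with ⟨a, rfl | rfl⟩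
    · rw [card_even (by omega), sievePoly_eval_two_even hwr _ _ (by omega)]
    · rw [card_odd (by omega), sievePoly_eval_two_odd hwr _ _ (by omega)]
  · simp only [if_neg hr3.ne', add_zero]
    by_cases hk : r ∣ k
    · obtain ⟨a, rfl⟩ := hk
      rw [card_dvd hm0 (by omega), sievePoly_eval_three hwr hr3 _ _ hm0]
    · rw [sievePoly_eval_not_dvd hwr hr3 _ _ hm0 hk, Nat.cast_eq_zero, Nat.card_eq_zero]
      left
      exact ⟨fun T => hk ⟨_, T.2.2⟩⟩
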